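/- arXiv:2410.02903 — 12 statements merged into one kernel-verified Lean document; each statement's English description precedes it below -/
import Mathlib

section
/- Safety / forward invariance (Theorem 1, Item 1): For every DAF trajectory (p, v) on an interval [0, T) (0 < T ≤ ∞) with initial condition satisfying d(p(0)) > 0, one has d(p(t)) > 0 for all t ∈ [0, T); equivalently, the set {q ∈ ℝⁿ : d(q) > 0} × ℝⁿ is forward invariant for the closed-loop DAF dynamics. -/
open scoped RealInnerProductSpace

/-!
Along a trajectory write `z t = d (p t)` for the distance to the inflated obstacle and
`w = ⟪η (p t), v t⟫` for its rate. Where `0 < z < ε₁` the repulsive damping is exactly `k₃ w / z`,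
so that `w' ≥ -C - k₃ z' / z`, with `C` a bound for the Hessian term `⟪H v, v⟫` and for the
proportional-derivative feedback on a compact time interval. Hence `w + k₃ log z + C t` is
nondecreasing. As `w ≤ ‖v‖` is bounded, `log z` is bounded below, and `z` cannot reach `0` in finite
time. The scalar argument is `pos_of_log_damping`; the theorem applies it on a short interval ending
at the first time at which `z ≤ 0`.
-/

/-- If `z` is positive before time `b`, its derivative `w` is bounded above, and `w` is subject to
no more than a damping `k w / z` up to a bounded term, then `z` is still positive at time `b`:
`w + k log z + C t` is monotone, which bounds `log z` below up to `b`. -/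
lemma pos_of_log_damping {z w w' : ℝ → ℝ} {a b k C V : ℝ} (hab : a < b) (hk : 0 < k) (hC : 0 ≤ C)
    (hz : ContinuousOn z (Set.Icc a b)) (hzpos : ∀ t ∈ Set.Ico a b, 0 < z t)
    (hw : ContinuousOn w (Set.Ico a b)) (hwV : ∀ t ∈ Set.Ico a b, w t ≤ V)
    (hzd : ∀ t ∈ Set.Ioo a b, HasDerivAt z (w t) t)
    (hwd : ∀ t ∈ Set.Ioo a b, HasDerivAt w (w' t) t)
    (hbound : ∀ t ∈ Set.Ioo a b, -C - k * (w t / z t) ≤ w' t) : 0 < z b := by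
  have hmono : MonotoneOn (fun t => w t + k * Real.log (z t) + C * t) (Set.Ico a b) := by
    have hd : ∀ t ∈ Set.Ioo a b, HasDerivAt (fun t => w t + k * Real.log (z t) + C * t)
        (w' t + k * (w t / z t) + C * 1) t := fun t ht =>
      ((hwd t ht).add (((hzd t ht).log (hzpos t ⟨ht.1.le, ht.2⟩).ne').const_mul k)).add
        ((hasDerivAt_id t).const_mul C)
    refine monotoneOn_of_deriv_nonneg (convex_Ico a b) ?_ ?_ ?_
    · refine (hw.add (continuousOn_const.mul ?_)).add (by fun_prop)
      exact (hz.mono Set.Ico_subset_Icc_self).log fun t ht => (hzpos t ht).ne'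
    · rw [interior_Ico]
      exact fun t ht => (hd t ht).differentiableAt.differentiableWithinAt
    · rw [interior_Ico]
      intro t ht
      rw [(hd t ht).deriv]
      linarith [hbound t ht]
  set c := (w a + k * Real.log (z a) + C * a - C * b - V) / k with hc
  have hlow : ∀ t ∈ Set.Ico a b, Real.exp c ≤ z t := by
    intro t ht
    rw [← Real.le_log_iff_exp_le (hzpos t ht), hc, div_le_iff₀ hk]
    have h1 : w a + k * Real.log (z a) + C * a ≤ w t + k * Real.log (z t) + C * t :=
      hmono ⟨le_rfl, hab⟩ ht ht.1
    have h2 := hwV t ht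
    have h3 : C * t ≤ C * b := mul_le_mul_of_nonneg_left ht.2.le hC
    linarith
  have hb : Real.exp c ≤ z b := by
    have hcl : b ∈ closure (Set.Ico a b) := by
      rw [closure_Ico hab.ne]; exact ⟨hab.le, le_rfl⟩
    have hbmem : b ∈ Set.Icc a b := ⟨hab.le, le_rfl⟩
    have : (nhdsWithin b (Set.Ico a b)).NeBot := mem_closure_iff_nhdsWithin_neBot.1 hcl
    exact ge_of_tendsto ((hz b hbmem).mono Set.Ico_subset_Icc_self)
      (eventually_nhdsWithin_of_forall hlow)
  exact (Real.exp_pos c).trans_le hb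

theorem daf_safety {n : ℕ}
    (X : Set (EuclideanSpace ℝ (Fin n))) (hX : IsClosed X) (hXne : Xᶜ.Nonempty)
    (ε k₁ k₂ k₃ ε₁ ε₂ ρ M : ℝ)
    (hε : 0 < ε) (hk₁ : 0 < k₁) (hk₂ : 0 < k₂) (hk₃ : 0 < k₃)
    (hε₁ : 0 < ε₁) (hε₁₂ : ε₁ < ε₂) (hρ : ε + ε₂ < ρ) (hM : 0 < M)
    (p_d : EuclideanSpace ℝ (Fin n)) (hpd : 0 < Metric.infDist p_d Xᶜ - ε)
    (γ : ℝ → ℝ)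
    (hγnn : ∀ z, 0 < z → 0 ≤ γ z)
    (hγC1 : ContDiffOn ℝ 1 γ (Set.Ioi (0:ℝ)))
    (hγinv : ∀ z, 0 < z → z < ε₁ → γ z = 1 / z)
    (hγzero : ∀ z, ε₂ ≤ z → γ z = 0)
    (η : EuclideanSpace ℝ (Fin n) → EuclideanSpace ℝ (Fin n))
    (H : EuclideanSpace ℝ (Fin n) → EuclideanSpace ℝ (Fin n) →L[ℝ] EuclideanSpace ℝ (Fin n))
    (hgrad : ∀ x : EuclideanSpace ℝ (Fin n), 0 < Metric.infDist x Xᶜ → Metric.infDist x Xᶜ < ρ →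
      HasGradientAt (fun y : EuclideanSpace ℝ (Fin n) => Metric.infDist y Xᶜ) (η x) x)
    (hunit : ∀ x : EuclideanSpace ℝ (Fin n), 0 < Metric.infDist x Xᶜ → Metric.infDist x Xᶜ < ρ → ‖η x‖ = 1)
    (hhess : ∀ x : EuclideanSpace ℝ (Fin n), 0 < Metric.infDist x Xᶜ → Metric.infDist x Xᶜ < ρ →
      HasFDerivAt η (H x) x)
    (hHcont : ContinuousOn H {x : EuclideanSpace ℝ (Fin n) |
      0 < Metric.infDist x Xᶜ ∧ Metric.infDist x Xᶜ < ρ})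
    (hHsa : ∀ x : EuclideanSpace ℝ (Fin n), 0 < Metric.infDist x Xᶜ → Metric.infDist x Xᶜ < ρ →
      ∀ a b : EuclideanSpace ℝ (Fin n), ⟪H x a, b⟫ = ⟪a, H x b⟫)
    (hHbd : ∀ x : EuclideanSpace ℝ (Fin n), 0 < Metric.infDist x Xᶜ → Metric.infDist x Xᶜ < ρ →
      ‖H x‖ ≤ M)
    (I : Set ℝ) (hI : (∃ T > 0, I = Set.Ico (0:ℝ) T) ∨ I = Set.Ici (0:ℝ))
    (p v : ℝ → EuclideanSpace ℝ (Fin n))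
    (hp : ∀ t ∈ I, HasDerivWithinAt p (v t) (I) t)
    (hv : ∀ t ∈ I, HasDerivWithinAt v
      (-(k₁ • (p t - p_d)) - k₂ • v t
        - (k₃ * γ (Metric.infDist (p t) Xᶜ - ε) * ⟪η (p t), v t⟫) • η (p t)) (I) t)
    (h0I : (0:ℝ) ∈ I)
    (hinit : 0 < Metric.infDist (p 0) Xᶜ - ε) :
    ∀ t ∈ I, 0 < Metric.infDist (p t) Xᶜ - ε := by
  intro T hT
  by_contra hneg
  have hIcc : ∀ b ∈ I, Set.Icc 0 b ⊆ I := by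
    rintro b hb s ⟨hs0, hsb⟩
    rcases hI with ⟨T', -, rfl⟩ | rfl
    · exact ⟨hs0, hsb.trans_lt hb.2⟩
    · exact hs0
  have hT0 : 0 ≤ T := by
    rcases hI with ⟨T', -, rfl⟩ | rfl
    · exact hT.1
    · exact hT
  have hpc : ContinuousOn p I := fun t ht => (hp t ht).continuousWithinAt
  have hvc : ContinuousOn v I := fun t ht => (hv t ht).continuousWithinAt
  set z : ℝ → ℝ := fun t => Metric.infDist (p t) Xᶜ - ε with hzdef
  have hzc : ContinuousOn z I :=
    ((Metric.continuous_infDist_pt _).comp_continuousOn hpc).sub continuousOn_const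
  -- the first time `b` at which `z ≤ 0`
  obtain ⟨b, ⟨hbT, hzb⟩, hbmin⟩ : ∃ b, IsLeast (Set.Icc 0 T ∩ z ⁻¹' Set.Iic 0) b :=
    (isCompact_Icc.of_isClosed_subset ((hzc.mono (hIcc T hT)).preimage_isClosed_of_isClosed
      isClosed_Icc isClosed_Iic) Set.inter_subset_left).exists_isLeast
      ⟨T, ⟨hT0, le_rfl⟩, not_lt.1 hneg⟩
  have hzb : z b ≤ 0 := hzb
  have hbI : b ∈ I := hIcc T hT hbT
  have hzpos : ∀ t, 0 ≤ t → t < b → 0 < z t := by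
    intro t ht0 htb
    by_contra h
    exact (hbmin ⟨⟨ht0, htb.le.trans hbT.2⟩, not_lt.1 h⟩).not_gt htb
  have hb0 : 0 < b := by
    refine lt_of_le_of_ne hbT.1 fun h => ?_
    rw [← h] at hzb
    exact absurd hinit (not_lt.2 hzb)
  -- just before `b` the gain `γ` is on its singular branch `1 / z`
  obtain ⟨a, ha0, hab, hasmall⟩ : ∃ a, 0 ≤ a ∧ a < b ∧ ∀ t ∈ Set.Ico a b, z t < ε₁ := by
    have h1 : ∀ᶠ t in nhdsWithin b (Set.Icc 0 b), z t < ε₁ :=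
      ((hzc b hbI).mono (hIcc b hbI)).eventually_lt_const (hzb.trans_lt hε₁)
    rw [nhdsWithin_Icc_eq_nhdsLE hb0] at h1
    obtain ⟨l, hl, hls⟩ := (mem_nhdsLE_iff_exists_Ioc_subset' hb0).1 h1
    have hl' : l < b := hl
    refine ⟨max 0 ((l + b) / 2), le_max_left _ _, max_lt hb0 (by linarith), fun t ht => ?_⟩
    exact hls ⟨by linarith [le_max_right 0 ((l + b) / 2), ht.1], ht.2.le⟩
  -- bounds for the velocity and for the proportional-derivative feedback up to time `b`
  obtain ⟨V, hV⟩ := isCompact_Icc.exists_bound_of_continuousOn (hvc.mono (hIcc b hbI))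
  obtain ⟨B, hB⟩ := isCompact_Icc.exists_bound_of_continuousOn
    (f := fun t => k₁ • (p t - p_d) + k₂ • v t)
    ((((hpc.sub continuousOn_const).const_smul k₁).add (hvc.const_smul k₂)).mono (hIcc b hbI))
  have hV0 : 0 ≤ V := (norm_nonneg _).trans (hV 0 ⟨le_rfl, hb0.le⟩)
  have hB0 : 0 ≤ B := (norm_nonneg _).trans (hB 0 ⟨le_rfl, hb0.le⟩)
  have hsub : Set.Ico a b ⊆ Set.Icc 0 b := fun t ht => ⟨ha0.trans ht.1, ht.2.le⟩
  have hU : ∀ t ∈ Set.Ico a b,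
      0 < Metric.infDist (p t) Xᶜ ∧ Metric.infDist (p t) Xᶜ < ρ := by
    intro t ht
    have h1 : 0 < Metric.infDist (p t) Xᶜ - ε := hzpos t (ha0.trans ht.1) ht.2
    have h2 : Metric.infDist (p t) Xᶜ - ε < ε₁ := hasmall t ht
    constructor <;> linarith
  have hnhds : ∀ t ∈ Set.Ioo a b, I ∈ nhds t := fun t ht =>
    Filter.mem_of_superset (Icc_mem_nhds (ha0.trans_lt ht.1) ht.2) (hIcc b hbI)
  have hηle : ∀ t ∈ Set.Ico a b, ∀ u : EuclideanSpace ℝ (Fin n), |⟪η (p t), u⟫| ≤ ‖u‖ := by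
    intro t ht u
    have := abs_real_inner_le_norm (η (p t)) u
    rwa [hunit _ (hU t ht).1 (hU t ht).2, one_mul] at this
  refine absurd (pos_of_log_damping (z := z) (w := fun t => ⟪η (p t), v t⟫)
    (w' := fun t => ⟪η (p t), -(k₁ • (p t - p_d)) - k₂ • v t
        - (k₃ * γ (Metric.infDist (p t) Xᶜ - ε) * ⟪η (p t), v t⟫) • η (p t)⟫
        + ⟪H (p t) (v t), v t⟫)
    (C := B + M * V * V) (V := V) hab hk₃ (by positivity)
    (hzc.mono fun t ht => hIcc b hbI ⟨ha0.trans ht.1, ht.2⟩)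
    (fun t ht => hzpos t (ha0.trans ht.1) ht.2) ?_ ?_ ?_ ?_ ?_) (not_lt.2 hzb)
  · intro t ht
    have hη := (hhess _ (hU t ht).1 (hU t ht).2).continuousAt
    have hsI := hsub.trans (hIcc b hbI)
    exact (hη.comp_continuousWithinAt ((hpc.mono hsI) t ht)).inner ((hvc.mono hsI) t ht)
  · intro t ht
    exact (le_abs_self _).trans ((hηle t ht _).trans (hV t (hsub ht)))
  · intro t ht
    have ht' := Set.Ioo_subset_Ico_self ht
    have hpt := (hp t (hIcc b hbI (hsub ht'))).hasDerivAt (hnhds t ht)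
    have h := (hgrad _ (hU t ht').1 (hU t ht').2).hasFDerivAt.comp_hasDerivAt t hpt
    simpa [hzdef, Function.comp_def] using h.sub_const ε
  · intro t ht
    have ht' := Set.Ioo_subset_Ico_self ht
    have hpt := (hp t (hIcc b hbI (hsub ht'))).hasDerivAt (hnhds t ht)
    have hvt := (hv t (hIcc b hbI (hsub ht'))).hasDerivAt (hnhds t ht)
    exact ((hhess _ (hU t ht').1 (hU t ht').2).comp_hasDerivAt t hpt).inner ℝ hvt
  · intro t ht
    have ht' := Set.Ioo_subset_Ico_self ht
    have hη1 := hunit _ (hU t ht').1 (hU t ht').2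
    have hfb := (hηle t ht' (k₁ • (p t - p_d) + k₂ • v t)).trans (hB t (hsub ht'))
    have hcurv : |⟪H (p t) (v t), v t⟫| ≤ M * V * V := by
      refine (abs_real_inner_le_norm _ _).trans ?_
      have h1 : ‖H (p t) (v t)‖ ≤ M * V :=
        (H (p t)).le_of_opNorm_le_of_le (hHbd _ (hU t ht').1 (hU t ht').2) (hV t (hsub ht'))
      exact mul_le_mul h1 (hV t (hsub ht')) (norm_nonneg _) (by positivity)
    have hγt : γ (Metric.infDist (p t) Xᶜ - ε) = 1 / z t :=
      hγinv _ (hzpos t (ha0.trans ht'.1) ht.2) (hasmall t ht')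
    have hexp : ⟪η (p t), -(k₁ • (p t - p_d)) - k₂ • v t
        - (k₃ * γ (Metric.infDist (p t) Xᶜ - ε) * ⟪η (p t), v t⟫) • η (p t)⟫
        = -⟪η (p t), k₁ • (p t - p_d) + k₂ • v t⟫ - k₃ * (⟪η (p t), v t⟫ / z t) := by
      rw [hγt, ← neg_add', inner_sub_right, inner_neg_right, inner_smul_right _ (η (p t)),
        real_inner_self_eq_norm_sq, hη1]
      ring
    simp only [hexp]
    linarith [(abs_le.1 hfb).2, (abs_le.1 hcurv).1]
end

section
/- Lyapunov derivative formula (Equation (22)): For every DAF trajectory (p, v) on an interval I with d(p(t)) > 0 for all t ∈ I, the function t ↦ L(p(t), v(t)) is differentiable on I with derivative equal to −k₂ ‖v(t)‖² − k₃ γ(d(p(t))) ⟪η(p(t)), v(t)⟫² (the second term being 0 whenever γ(d(p(t))) = 0); in particular this derivative is ≤ 0. -/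
open scoped RealInnerProductSpace

theorem daf_lyapunov_derivative {n : ℕ}
    (X : Set (EuclideanSpace ℝ (Fin n))) (hX : IsClosed X) (hXne : Xᶜ.Nonempty)
    (ε k₁ k₂ k₃ ε₁ ε₂ ρ M : ℝ)
    (hε : 0 < ε) (hk₁ : 0 < k₁) (hk₂ : 0 < k₂) (hk₃ : 0 < k₃)
    (hε₁ : 0 < ε₁) (hε₁₂ : ε₁ < ε₂) (hρ : ε + ε₂ < ρ) (hM : 0 < M)
    (p_d : EuclideanSpace ℝ (Fin n)) (hpd : 0 < Metric.infDist p_d Xᶜ - ε)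
    (γ : ℝ → ℝ)
    (hγnn : ∀ z, 0 < z → 0 ≤ γ z)
    (hγC1 : ContDiffOn ℝ 1 γ (Set.Ioi (0:ℝ)))
    (hγinv : ∀ z, 0 < z → z < ε₁ → γ z = 1 / z)
    (hγzero : ∀ z, ε₂ ≤ z → γ z = 0)
    (η : EuclideanSpace ℝ (Fin n) → EuclideanSpace ℝ (Fin n))
    (H : EuclideanSpace ℝ (Fin n) → EuclideanSpace ℝ (Fin n) →L[ℝ] EuclideanSpace ℝ (Fin n))
    (hgrad : ∀ x : EuclideanSpace ℝ (Fin n), 0 < Metric.infDist x Xᶜ → Metric.infDist x Xᶜ < ρ →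
      HasGradientAt (fun y : EuclideanSpace ℝ (Fin n) => Metric.infDist y Xᶜ) (η x) x)
    (hunit : ∀ x : EuclideanSpace ℝ (Fin n), 0 < Metric.infDist x Xᶜ → Metric.infDist x Xᶜ < ρ → ‖η x‖ = 1)
    (hhess : ∀ x : EuclideanSpace ℝ (Fin n), 0 < Metric.infDist x Xᶜ → Metric.infDist x Xᶜ < ρ →
      HasFDerivAt η (H x) x)
    (hHcont : ContinuousOn H {x : EuclideanSpace ℝ (Fin n) |
      0 < Metric.infDist x Xᶜ ∧ Metric.infDist x Xᶜ < ρ})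
    (hHsa : ∀ x : EuclideanSpace ℝ (Fin n), 0 < Metric.infDist x Xᶜ → Metric.infDist x Xᶜ < ρ →
      ∀ a b : EuclideanSpace ℝ (Fin n), ⟪H x a, b⟫ = ⟪a, H x b⟫)
    (hHbd : ∀ x : EuclideanSpace ℝ (Fin n), 0 < Metric.infDist x Xᶜ → Metric.infDist x Xᶜ < ρ →
      ‖H x‖ ≤ M)
    (I : Set ℝ) (hI0 : (0:ℝ) ∈ I) (hIsub : I ⊆ Set.Ici (0:ℝ)) (hIconn : I.OrdConnected)
    (p v : ℝ → EuclideanSpace ℝ (Fin n))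
    (hp : ∀ t ∈ I, HasDerivWithinAt p (v t) (I) t)
    (hv : ∀ t ∈ I, HasDerivWithinAt v
      (-(k₁ • (p t - p_d)) - k₂ • v t
        - (k₃ * γ (Metric.infDist (p t) Xᶜ - ε) * ⟪η (p t), v t⟫) • η (p t)) (I) t)
    (hsafe : ∀ t ∈ I, 0 < Metric.infDist (p t) Xᶜ - ε) :
    ∀ t ∈ I,
      HasDerivWithinAt
        (fun s => k₁ / 2 * ‖p s - p_d‖ ^ 2 + 1 / 2 * ‖v s‖ ^ 2)
        (-(k₂ * ‖v t‖ ^ 2)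
          - k₃ * γ (Metric.infDist (p t) Xᶜ - ε) * ⟪η (p t), v t⟫ ^ 2) I t ∧
      (-(k₂ * ‖v t‖ ^ 2)
        - k₃ * γ (Metric.infDist (p t) Xᶜ - ε) * ⟪η (p t), v t⟫ ^ 2) ≤ 0 := by
  intro t ht
  refine ⟨?_, ?_⟩
  -- Differentiating gives `k₁ ⟪p - p_d, v⟫` from the potential energy, and the spring force
  -- contributes its negative to the derivative of the kinetic energy.
  · have h := (((hp t ht).sub_const p_d).norm_sq.const_mul (k₁ / 2)).add
      ((hv t ht).norm_sq.const_mul (1 / 2))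
    refine h.congr_deriv ?_
    simp only [inner_sub_right, inner_neg_right, real_inner_smul_right,
      real_inner_self_eq_norm_sq, real_inner_comm (v t) (p t - p_d), real_inner_comm (v t) (η (p t))]
    ring
  · have hγt := hγnn _ (hsafe t ht)
    have h₁ : 0 ≤ k₂ * ‖v t‖ ^ 2 := by positivity
    have h₂ : 0 ≤ k₃ * γ (Metric.infDist (p t) Xᶜ - ε) * ⟪η (p t), v t⟫ ^ 2 := by positivity
    linarith
end

section
/- Boundedness of closed-loop trajectories: For every DAF trajectory (p, v) on [0, T) with d(p(t)) > 0 for all t ∈ [0, T), the function t ↦ L(p(t), v(t)) is nonincreasing; consequently, for all t ∈ [0, T), ‖v(t)‖² ≤ 2 L(p(0), v(0)) and k₁ ‖p(t) − p_d‖² ≤ 2 L(p(0), v(0)). -/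
/-!
Along a trajectory the energy `k₁ / 2 * ‖p - p_d‖ ^ 2 + 1 / 2 * ‖v‖ ^ 2` has derivative
`-(k₂ * ‖v‖ ^ 2 + k₃ * γ (d p) * ⟪η p, v⟫ ^ 2)`: the power of the attractive spring force cancels
against the change of the potential, so only the two damping terms remain. Since the trajectory
stays where `d` is positive, `γ (d p)` is nonnegative and so the energy is nonincreasing. Both
summands of the energy are nonnegative, so each is bounded by the initial energy.
-/

open scoped RealInnerProductSpace

theorem daf_bounded_trajectories {n : ℕ}
    (X : Set (EuclideanSpace ℝ (Fin n))) (hX : IsClosed X) (hXne : Xᶜ.Nonempty)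
    (ε k₁ k₂ k₃ ε₁ ε₂ ρ M : ℝ)
    (hε : 0 < ε) (hk₁ : 0 < k₁) (hk₂ : 0 < k₂) (hk₃ : 0 < k₃)
    (hε₁ : 0 < ε₁) (hε₁₂ : ε₁ < ε₂) (hρ : ε + ε₂ < ρ) (hM : 0 < M)
    (p_d : EuclideanSpace ℝ (Fin n)) (hpd : 0 < Metric.infDist p_d Xᶜ - ε)
    (γ : ℝ → ℝ)
    (hγnn : ∀ z, 0 < z → 0 ≤ γ z)
    (hγC1 : ContDiffOn ℝ 1 γ (Set.Ioi (0:ℝ)))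
    (hγinv : ∀ z, 0 < z → z < ε₁ → γ z = 1 / z)
    (hγzero : ∀ z, ε₂ ≤ z → γ z = 0)
    (η : EuclideanSpace ℝ (Fin n) → EuclideanSpace ℝ (Fin n))
    (H : EuclideanSpace ℝ (Fin n) → EuclideanSpace ℝ (Fin n) →L[ℝ] EuclideanSpace ℝ (Fin n))
    (hgrad : ∀ x : EuclideanSpace ℝ (Fin n), 0 < Metric.infDist x Xᶜ → Metric.infDist x Xᶜ < ρ →
      HasGradientAt (fun y : EuclideanSpace ℝ (Fin n) => Metric.infDist y Xᶜ) (η x) x)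
    (hunit : ∀ x : EuclideanSpace ℝ (Fin n), 0 < Metric.infDist x Xᶜ → Metric.infDist x Xᶜ < ρ → ‖η x‖ = 1)
    (hhess : ∀ x : EuclideanSpace ℝ (Fin n), 0 < Metric.infDist x Xᶜ → Metric.infDist x Xᶜ < ρ →
      HasFDerivAt η (H x) x)
    (hHcont : ContinuousOn H {x : EuclideanSpace ℝ (Fin n) |
      0 < Metric.infDist x Xᶜ ∧ Metric.infDist x Xᶜ < ρ})
    (hHsa : ∀ x : EuclideanSpace ℝ (Fin n), 0 < Metric.infDist x Xᶜ → Metric.infDist x Xᶜ < ρ →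
      ∀ a b : EuclideanSpace ℝ (Fin n), ⟪H x a, b⟫ = ⟪a, H x b⟫)
    (hHbd : ∀ x : EuclideanSpace ℝ (Fin n), 0 < Metric.infDist x Xᶜ → Metric.infDist x Xᶜ < ρ →
      ‖H x‖ ≤ M)
    (I : Set ℝ) (hI : (∃ T > 0, I = Set.Ico (0:ℝ) T) ∨ I = Set.Ici (0:ℝ))
    (p v : ℝ → EuclideanSpace ℝ (Fin n))
    (hp : ∀ t ∈ I, HasDerivWithinAt p (v t) (I) t)
    (hv : ∀ t ∈ I, HasDerivWithinAt v
      (-(k₁ • (p t - p_d)) - k₂ • v t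
        - (k₃ * γ (Metric.infDist (p t) Xᶜ - ε) * ⟪η (p t), v t⟫) • η (p t)) (I) t)
    (h0I : (0:ℝ) ∈ I)
    (hsafe : ∀ t ∈ I, 0 < Metric.infDist (p t) Xᶜ - ε) :
    AntitoneOn (fun t => k₁ / 2 * ‖p t - p_d‖ ^ 2 + 1 / 2 * ‖v t‖ ^ 2) I ∧
    ∀ t ∈ I,
      ‖v t‖ ^ 2 ≤ 2 * (k₁ / 2 * ‖p 0 - p_d‖ ^ 2 + 1 / 2 * ‖v 0‖ ^ 2) ∧
      k₁ * ‖p t - p_d‖ ^ 2 ≤ 2 * (k₁ / 2 * ‖p 0 - p_d‖ ^ 2 + 1 / 2 * ‖v 0‖ ^ 2) := by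
  have hderiv : ∀ t ∈ I, HasDerivWithinAt
      (fun t => k₁ / 2 * ‖p t - p_d‖ ^ 2 + 1 / 2 * ‖v t‖ ^ 2)
      (-(k₂ * ‖v t‖ ^ 2
        + k₃ * γ (Metric.infDist (p t) Xᶜ - ε) * ⟪η (p t), v t⟫ ^ 2)) I t := by
    intro t ht
    have h := (((hp t ht).sub_const p_d).norm_sq.const_mul (k₁ / 2)).add
      ((hv t ht).norm_sq.const_mul (1 / 2))
    refine h.congr_deriv ?_
    simp only [inner_sub_right, inner_neg_right, inner_smul_right, real_inner_self_eq_norm_sq,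
      real_inner_comm (v t)]
    ring
  have hconv : Convex ℝ I := by
    rcases hI with ⟨T, -, rfl⟩ | rfl
    exacts [convex_Ico 0 T, convex_Ici 0]
  have hanti : AntitoneOn (fun t => k₁ / 2 * ‖p t - p_d‖ ^ 2 + 1 / 2 * ‖v t‖ ^ 2) I := by
    refine antitoneOn_of_hasDerivWithinAt_nonpos hconv
      (fun t ht => (hderiv t ht).continuousWithinAt)
      (fun t ht => (hderiv t (interior_subset ht)).mono interior_subset) fun t ht => ?_
    have hγ := hγnn _ (hsafe t (interior_subset ht))
    exact neg_nonpos.mpr (by positivity)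
  refine ⟨hanti, fun t ht => ?_⟩
  have h0t : 0 ≤ t := by
    rcases hI with ⟨T, -, rfl⟩ | rfl
    exacts [ht.1, ht]
  have hle := hanti h0I ht h0t
  have hpos : 0 ≤ k₁ * ‖p t - p_d‖ ^ 2 := by positivity
  have hvel : 0 ≤ ‖v t‖ ^ 2 := by positivity
  dsimp only at hle
  constructor <;> linarith
end

section
/- Second derivative of the distance along trajectories (Equation (23)): For every DAF trajectory (p, v) on an interval I such that p(t) ∈ U and d(p(t)) > 0 for all t ∈ I, the map t ↦ d(p(t)) is twice differentiable on I, its first derivative equals ⟪η(p(t)), v(t)⟫, and its second derivative equals −k₃ γ(d(p(t))) ⟪η(p(t)), v(t)⟫ − k₂ ⟪η(p(t)), v(t)⟫ − k₁ ⟪η(p(t)), p(t) − p_d⟫ + ⟪v(t), H(p(t)) v(t)⟫. -/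
/-!
The first derivative is the chain rule for `infDist · Xᶜ`, whose gradient on the tubular region is
`η`. Differentiating `⟪η (p s), v s⟫` by the product rule gives
`⟪η, v'⟫ + ⟪H v, v⟫`. The claimed formula follows by substituting the closed-loop expression
for `v'` and using `‖η‖ = 1` in the damping term and the self-adjointness of `H` in the curvature
term.
-/

open scoped RealInnerProductSpace

theorem daf_distance_second_derivative {n : ℕ}
    (X : Set (EuclideanSpace ℝ (Fin n))) (hX : IsClosed X) (hXne : Xᶜ.Nonempty)
    (ε k₁ k₂ k₃ ε₁ ε₂ ρ M : ℝ)
    (hε : 0 < ε) (hk₁ : 0 < k₁) (hk₂ : 0 < k₂) (hk₃ : 0 < k₃)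
    (hε₁ : 0 < ε₁) (hε₁₂ : ε₁ < ε₂) (hρ : ε + ε₂ < ρ) (hM : 0 < M)
    (p_d : EuclideanSpace ℝ (Fin n)) (hpd : 0 < Metric.infDist p_d Xᶜ - ε)
    (γ : ℝ → ℝ)
    (hγnn : ∀ z, 0 < z → 0 ≤ γ z)
    (hγC1 : ContDiffOn ℝ 1 γ (Set.Ioi (0:ℝ)))
    (hγinv : ∀ z, 0 < z → z < ε₁ → γ z = 1 / z)
    (hγzero : ∀ z, ε₂ ≤ z → γ z = 0)
    (η : EuclideanSpace ℝ (Fin n) → EuclideanSpace ℝ (Fin n))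
    (H : EuclideanSpace ℝ (Fin n) → EuclideanSpace ℝ (Fin n) →L[ℝ] EuclideanSpace ℝ (Fin n))
    (hgrad : ∀ x : EuclideanSpace ℝ (Fin n), 0 < Metric.infDist x Xᶜ → Metric.infDist x Xᶜ < ρ →
      HasGradientAt (fun y : EuclideanSpace ℝ (Fin n) => Metric.infDist y Xᶜ) (η x) x)
    (hunit : ∀ x : EuclideanSpace ℝ (Fin n), 0 < Metric.infDist x Xᶜ → Metric.infDist x Xᶜ < ρ → ‖η x‖ = 1)
    (hhess : ∀ x : EuclideanSpace ℝ (Fin n), 0 < Metric.infDist x Xᶜ → Metric.infDist x Xᶜ < ρ →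
      HasFDerivAt η (H x) x)
    (hHcont : ContinuousOn H {x : EuclideanSpace ℝ (Fin n) |
      0 < Metric.infDist x Xᶜ ∧ Metric.infDist x Xᶜ < ρ})
    (hHsa : ∀ x : EuclideanSpace ℝ (Fin n), 0 < Metric.infDist x Xᶜ → Metric.infDist x Xᶜ < ρ →
      ∀ a b : EuclideanSpace ℝ (Fin n), ⟪H x a, b⟫ = ⟪a, H x b⟫)
    (hHbd : ∀ x : EuclideanSpace ℝ (Fin n), 0 < Metric.infDist x Xᶜ → Metric.infDist x Xᶜ < ρ →
      ‖H x‖ ≤ M)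
    (I : Set ℝ) (hI0 : (0:ℝ) ∈ I) (hIsub : I ⊆ Set.Ici (0:ℝ)) (hIconn : I.OrdConnected)
    (p v : ℝ → EuclideanSpace ℝ (Fin n))
    (hp : ∀ t ∈ I, HasDerivWithinAt p (v t) (I) t)
    (hv : ∀ t ∈ I, HasDerivWithinAt v
      (-(k₁ • (p t - p_d)) - k₂ • v t
        - (k₃ * γ (Metric.infDist (p t) Xᶜ - ε) * ⟪η (p t), v t⟫) • η (p t)) (I) t)
    (hsafe : ∀ t ∈ I, 0 < Metric.infDist (p t) Xᶜ - ε)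
    (hU : ∀ t ∈ I, 0 < Metric.infDist (p t) Xᶜ ∧ Metric.infDist (p t) Xᶜ < ρ) :
    ∀ t ∈ I,
      HasDerivWithinAt (fun s => Metric.infDist (p s) Xᶜ - ε) (⟪η (p t), v t⟫) I t ∧
      HasDerivWithinAt (fun s => ⟪η (p s), v s⟫)
        (-(k₃ * γ (Metric.infDist (p t) Xᶜ - ε) * ⟪η (p t), v t⟫)
          - k₂ * ⟪η (p t), v t⟫ - k₁ * ⟪η (p t), p t - p_d⟫
          + ⟪v t, H (p t) (v t)⟫) I t := by
  intro t ht
  obtain ⟨h0, h1⟩ := hU t ht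
  have hη : HasDerivWithinAt (fun s => η (p s)) (H (p t) (v t)) I t :=
    (hhess (p t) h0 h1).comp_hasDerivWithinAt t (hp t ht)
  constructor
  · have h := (hgrad (p t) h0 h1).hasFDerivAt.comp_hasDerivWithinAt t (hp t ht)
    simpa using h.sub_const ε
  · have h := hη.inner ℝ (hv t ht)
    refine h.congr_deriv ?_
    rw [hHsa (p t) h0 h1]
    simp only [inner_sub_right, inner_neg_right, inner_smul_right, real_inner_self_eq_norm_sq,
      hunit (p t) h0 h1]
    ring
end

section
/- Modified Barbalat lemma (Lemma 2, from Micaelli–Samson): Let f, g, h : [0, ∞) → E with f differentiable and f′(t) = g(t) + h(t) for all t ≥ 0. Assume that g is uniformly continuous on [0, ∞), that f(t) → c as t → ∞ for some constant c ∈ E, and that h(t) → 0 as t → ∞. Then f′(t) → 0 as t → ∞ (and consequently g(t) → 0 as t → ∞). -/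
/-!
Since `h → 0`, it is enough to show `g → 0`. Fix `ε > 0` and let `η > 0` be such that `g` varies
by less than `ε / 4` over intervals of length `η`. For large `t`, the function
`s ↦ f s - s • g t` has derivative `(g s - g t) + h s` of norm at most `ε / 2` on `[t, t + η]`, so
the mean value inequality gives `‖f (t + η) - f t - η • g t‖ ≤ (ε / 2) * η`. As `f` converges,
`‖f (t + η) - f t‖ < (ε / 2) * η` for large `t`, hence `‖g t‖ < ε`.
Working with a fixed `η`, rather than integrating `f'`, avoids any regularity assumption on `h`.
-/

theorem modified_barbalat {E : Type*} [NormedAddCommGroup E] [NormedSpace ℝ E]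
    [FiniteDimensional ℝ E]
    (f g h : ℝ → E) (c : E)
    (hf : ∀ t ∈ Set.Ici (0:ℝ), HasDerivWithinAt f (g t + h t) (Set.Ici (0:ℝ)) t)
    (hg : UniformContinuousOn g (Set.Ici (0:ℝ)))
    (hfc : Filter.Tendsto f Filter.atTop (nhds c))
    (hh : Filter.Tendsto h Filter.atTop (nhds 0)) :
    Filter.Tendsto (fun t => g t + h t) Filter.atTop (nhds 0) ∧
    Filter.Tendsto g Filter.atTop (nhds 0) := by
  have key : Filter.Tendsto g Filter.atTop (nhds 0) := by
    rw [Metric.tendsto_nhds]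
    intro ε hε
    obtain ⟨δ, hδ, hgδ⟩ := Metric.uniformContinuousOn_iff.1 hg (ε / 4) (by positivity)
    -- half of `δ`, so that the closed interval `[t, t + η]` stays within distance `< δ` of `t`
    obtain ⟨η, hη, hηδ⟩ : ∃ η : ℝ, 0 < η ∧ η < δ := ⟨δ / 2, by positivity, by linarith⟩
    have hdiff : Filter.Tendsto (fun t => f (t + η) - f t) Filter.atTop (nhds 0) := by
      simpa using (hfc.comp (Filter.tendsto_atTop_add_const_right _ η Filter.tendsto_id)).sub hfc
    have hfsmall := Metric.tendsto_nhds.1 hdiff (ε / 2 * η) (by positivity)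
    obtain ⟨T, hT⟩ := Filter.eventually_atTop.1
      (Metric.tendsto_nhds.1 hh (ε / 4) (by positivity))
    filter_upwards [hfsmall, Filter.eventually_ge_atTop T, Filter.eventually_ge_atTop 0]
      with t hft hTt ht
    rw [dist_zero_right] at hft ⊢
    have hmv := norm_image_sub_le_of_norm_deriv_le_segment'
      (f := fun s => f s - s • g t) (f' := fun s => g s + h s - (1 : ℝ) • g t)
      (a := t) (b := t + η) (C := ε / 2)
      (fun s hs => ((hf s (ht.trans hs.1)).mono (fun x hx => ht.trans hx.1)).sub
        ((hasDerivWithinAt_id s _).smul_const (g t)))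
      (fun s hs => by
        have hgs := hgδ s (ht.trans hs.1) t ht (by
          rw [Real.dist_eq, abs_of_nonneg (by linarith [hs.1])]
          linarith [hs.2])
        have hhs := hT s (hTt.trans hs.1)
        rw [dist_eq_norm] at hgs
        rw [dist_zero_right] at hhs
        calc ‖g s + h s - (1 : ℝ) • g t‖ = ‖(g s - g t) + h s‖ := by
              rw [one_smul]; congr 1; abel
          _ ≤ ‖g s - g t‖ + ‖h s‖ := norm_add_le _ _
          _ ≤ ε / 2 := by linarith)
      (t + η) ⟨by linarith, le_rfl⟩
    have hsplit : η • g t = (f (t + η) - f t) -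
        ((f (t + η) - (t + η) • g t) - (f t - t • g t)) := by
      rw [add_smul]; abel
    have hlt : η * ‖g t‖ < η * ε := by
      calc η * ‖g t‖ = ‖η • g t‖ := by rw [norm_smul, Real.norm_of_nonneg hη.le]
        _ ≤ ‖f (t + η) - f t‖ + ‖(f (t + η) - (t + η) • g t) - (f t - t • g t)‖ := by
              rw [hsplit]; exact norm_sub_le _ _
        _ < η * ε := by
              have : ε / 2 * (t + η - t) = ε / 2 * η := by ring
              simp only [this] at hmv
              linarith
    exact lt_of_mul_lt_mul_left hlt hη.le
  exact ⟨by simpa using key.add hh, key⟩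
end

section
/- Velocity convergence: For every DAF trajectory (p, v) on [0, ∞) with d(p(t)) > 0 for all t ≥ 0, one has v(t) → 0 as t → ∞. -/
/-!
Let `E = (k₁ ‖p - p_d‖² + ‖v‖²) / 2` be the mechanical energy and `W = ‖v‖² / 2` its kinetic part.
Along a trajectory, with `γ` evaluated at the distance to the obstacles minus the margin,
`E' = -k₂ ‖v‖² - k₃ γ ⟪η, v⟫² ≤ -2 k₂ W`, so `E` decreases and `p`, `v` stay bounded.

The damping term is unbounded near the obstacles, so `W'` need not be bounded and Barbalat's lemma
does not apply directly. But this term only removes kinetic energy, so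
`W' ≤ -k₁ ⟪p - p_d, v⟫` is bounded *above*. A one-sided form of Barbalat's lemma
(`tendsto_zero_of_dissipation`) is enough: if `W` were not small at a late time `t`, it could not
have been small just before `t` either, and `E` would have lost a fixed amount of energy there,
which contradicts the convergence of `E`.
-/

open scoped RealInnerProductSpace

/-- One-sided Barbalat lemma: if `W ≥ 0` grows at rate at most `C` and `E ≥ 0` decreases at rate
at least `c * W`, then `W` tends to zero. No lower bound on the derivative of `W` is needed. -/
theorem tendsto_zero_of_dissipation {W E W' E' : ℝ → ℝ} {C c : ℝ} (hC : 0 < C) (hc : 0 < c)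
    (hW0 : ∀ t, 0 ≤ t → 0 ≤ W t) (hE0 : ∀ t, 0 ≤ t → 0 ≤ E t)
    (hW : ∀ t, 0 ≤ t → HasDerivWithinAt W (W' t) (Set.Ici 0) t)
    (hE : ∀ t, 0 ≤ t → HasDerivWithinAt E (E' t) (Set.Ici 0) t)
    (hW' : ∀ t, 0 ≤ t → W' t ≤ C) (hE' : ∀ t, 0 ≤ t → E' t ≤ -(c * W t)) :
    Filter.Tendsto W Filter.atTop (nhds 0) := by
  have hG : AntitoneOn (fun s => W s - C * s) (Set.Ici 0) := by
    refine antitoneOn_of_hasDerivWithinAt_nonpos (f' := fun s => W' s - C * 1) (convex_Ici 0)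
      (fun s hs => ?_) (fun s hs => ?_) (fun s hs => ?_)
    · exact ((hW s hs).sub ((hasDerivWithinAt_id s _).const_mul C)).continuousWithinAt
    · have hs0 := interior_subset hs
      exact ((hW s hs0).sub ((hasDerivWithinAt_id s _).const_mul C)).mono interior_subset
    · have := hW' s (interior_subset hs)
      linarith
  -- On the whole window `[t - h, t]` the value of `W` is at least `W t - C * h`.
  have key : ∀ h t, 0 ≤ h → h ≤ t → c * h * (W t - C * h) ≤ E (t - h) - E t := by
    intro h t hh ht
    have hsub : Set.Icc (t - h) t ⊆ Set.Ici 0 := fun s hs => by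
      have := hs.1
      simp only [Set.mem_Ici]
      linarith
    have hF : AntitoneOn (fun s => E s + c * (W t - C * h) * s) (Set.Icc (t - h) t) := by
      refine antitoneOn_of_hasDerivWithinAt_nonpos
        (f' := fun s => E' s + c * (W t - C * h) * 1) (convex_Icc _ _)
        (fun s hs => ?_) (fun s hs => ?_) (fun s hs => ?_)
      · exact (((hE s (hsub hs)).add
          ((hasDerivWithinAt_id s _).const_mul _)).continuousWithinAt).mono hsub
      · have hs0 := hsub (interior_subset hs)
        exact ((hE s hs0).add ((hasDerivWithinAt_id s _).const_mul _)).mono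
          (interior_subset.trans hsub)
      · have hs' := interior_subset hs
        have h1 := hE' s (hsub hs')
        have h2 := hG (hsub hs') (Set.mem_Ici.2 (hh.trans ht)) hs'.2
        simp only at h2
        have h3 : W t - C * h ≤ W s := by nlinarith [hs'.1]
        have := mul_le_mul_of_nonneg_left h3 hc.le
        linarith
    have := hF (Set.left_mem_Icc.2 (by linarith)) (Set.right_mem_Icc.2 (by linarith))
      (by linarith : t - h ≤ t)
    simp only at this
    linarith
  have hEanti : AntitoneOn E (Set.Ici 0) := by
    refine antitoneOn_of_hasDerivWithinAt_nonpos (f' := E') (convex_Ici 0)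
      (fun s hs => (hE s hs).continuousWithinAt)
      (fun s hs => (hE s (interior_subset hs)).mono interior_subset) (fun s hs => ?_)
    have h1 := hE' s (interior_subset hs)
    have := mul_nonneg hc.le (hW0 s (interior_subset hs))
    linarith
  -- Past a near-minimizing time `T` of `E`, the energy can drop by less than any given amount.
  have hcauchy : ∀ δ > 0, ∃ T, 0 ≤ T ∧ ∀ s t, T ≤ s → T ≤ t → E s - E t < δ := by
    intro δ hδ
    have hne : (E '' Set.Ici 0).Nonempty := ⟨E 0, 0, Set.self_mem_Ici, rfl⟩
    have hbdd : BddBelow (E '' Set.Ici 0) := ⟨0, by rintro _ ⟨t, ht, rfl⟩; exact hE0 t ht⟩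
    obtain ⟨_, ⟨T, hT, rfl⟩, hlt⟩ := exists_lt_of_csInf_lt hne (lt_add_of_pos_right _ hδ)
    refine ⟨T, hT, fun s t hs ht => ?_⟩
    have h1 := hEanti hT (le_trans hT hs) hs
    have h2 := csInf_le hbdd ⟨t, le_trans (Set.mem_Ici.1 hT) ht, rfl⟩
    linarith
  rw [Metric.tendsto_atTop]
  intro e he
  -- With this window length `C * h = e / 2`, a value `W t ≥ e` costs an energy of at least `c * h * e / 2`.
  set h := e / (2 * C) with hh
  have hpos : 0 < h := by positivity
  have hCh : C * h = e / 2 := by rw [hh]; field_simp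
  obtain ⟨T, hT, hTE⟩ := hcauchy (c * h * (e / 2)) (by positivity)
  refine ⟨T + h, fun t ht => ?_⟩
  have h1 := key h t hpos.le (by linarith)
  have h2 := hTE (t - h) t (by linarith) (by linarith)
  rw [Real.dist_eq, sub_zero, abs_of_nonneg (hW0 t (by linarith))]
  have h3 := lt_of_mul_lt_mul_left (h1.trans_lt h2) (by positivity)
  linarith

theorem daf_velocity_convergence {n : ℕ}
    (X : Set (EuclideanSpace ℝ (Fin n))) (hX : IsClosed X) (hXne : Xᶜ.Nonempty)
    (ε k₁ k₂ k₃ ε₁ ε₂ ρ M : ℝ)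
    (hε : 0 < ε) (hk₁ : 0 < k₁) (hk₂ : 0 < k₂) (hk₃ : 0 < k₃)
    (hε₁ : 0 < ε₁) (hε₁₂ : ε₁ < ε₂) (hρ : ε + ε₂ < ρ) (hM : 0 < M)
    (p_d : EuclideanSpace ℝ (Fin n)) (hpd : 0 < Metric.infDist p_d Xᶜ - ε)
    (γ : ℝ → ℝ)
    (hγnn : ∀ z, 0 < z → 0 ≤ γ z)
    (hγC1 : ContDiffOn ℝ 1 γ (Set.Ioi (0:ℝ)))
    (hγinv : ∀ z, 0 < z → z < ε₁ → γ z = 1 / z)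
    (hγzero : ∀ z, ε₂ ≤ z → γ z = 0)
    (η : EuclideanSpace ℝ (Fin n) → EuclideanSpace ℝ (Fin n))
    (H : EuclideanSpace ℝ (Fin n) → EuclideanSpace ℝ (Fin n) →L[ℝ] EuclideanSpace ℝ (Fin n))
    (hgrad : ∀ x : EuclideanSpace ℝ (Fin n), 0 < Metric.infDist x Xᶜ → Metric.infDist x Xᶜ < ρ →
      HasGradientAt (fun y : EuclideanSpace ℝ (Fin n) => Metric.infDist y Xᶜ) (η x) x)
    (hunit : ∀ x : EuclideanSpace ℝ (Fin n), 0 < Metric.infDist x Xᶜ → Metric.infDist x Xᶜ < ρ → ‖η x‖ = 1)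
    (hhess : ∀ x : EuclideanSpace ℝ (Fin n), 0 < Metric.infDist x Xᶜ → Metric.infDist x Xᶜ < ρ →
      HasFDerivAt η (H x) x)
    (hHcont : ContinuousOn H {x : EuclideanSpace ℝ (Fin n) |
      0 < Metric.infDist x Xᶜ ∧ Metric.infDist x Xᶜ < ρ})
    (hHsa : ∀ x : EuclideanSpace ℝ (Fin n), 0 < Metric.infDist x Xᶜ → Metric.infDist x Xᶜ < ρ →
      ∀ a b : EuclideanSpace ℝ (Fin n), ⟪H x a, b⟫ = ⟪a, H x b⟫)
    (hHbd : ∀ x : EuclideanSpace ℝ (Fin n), 0 < Metric.infDist x Xᶜ → Metric.infDist x Xᶜ < ρ →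
      ‖H x‖ ≤ M)
    (p v : ℝ → EuclideanSpace ℝ (Fin n))
    (hp : ∀ t ∈ Set.Ici (0:ℝ), HasDerivWithinAt p (v t) (Set.Ici (0:ℝ)) t)
    (hv : ∀ t ∈ Set.Ici (0:ℝ), HasDerivWithinAt v
      (-(k₁ • (p t - p_d)) - k₂ • v t
        - (k₃ * γ (Metric.infDist (p t) Xᶜ - ε) * ⟪η (p t), v t⟫) • η (p t)) (Set.Ici (0:ℝ)) t)
    (hsafe : ∀ t ∈ Set.Ici (0:ℝ), 0 < Metric.infDist (p t) Xᶜ - ε) :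
    Filter.Tendsto v Filter.atTop (nhds 0) := by
  set a : ℝ → EuclideanSpace ℝ (Fin n) := fun t => -(k₁ • (p t - p_d)) - k₂ • v t
        - (k₃ * γ (Metric.infDist (p t) Xᶜ - ε) * ⟪η (p t), v t⟫) • η (p t) with ha
  set W : ℝ → ℝ := fun t => ⟪v t, v t⟫ / 2 with hWdef
  set E : ℝ → ℝ := fun t => k₁ * (⟪p t - p_d, p t - p_d⟫ / 2) + W t with hEdef
  have hWd : ∀ t, 0 ≤ t → HasDerivWithinAt W ⟪a t, v t⟫ (Set.Ici 0) t := by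
    intro t ht
    refine (((hv t ht).inner ℝ (hv t ht)).div_const 2).congr_deriv ?_
    rw [real_inner_comm]
    ring
  have hEd : ∀ t, 0 ≤ t →
      HasDerivWithinAt E (k₁ * ⟪p t - p_d, v t⟫ + ⟪a t, v t⟫) (Set.Ici 0) t := by
    intro t ht
    have h1 := (hp t ht).sub_const p_d
    refine ((((h1.inner ℝ h1).div_const 2).const_mul k₁).add (hWd t ht)).congr_deriv ?_
    rw [real_inner_comm (p t - p_d) (v t)]
    ring
  -- Expanding the acceleration and dropping the damping towards the obstacles.
  have hpow : ∀ t, 0 ≤ t → ⟪a t, v t⟫ ≤ -(k₁ * ⟪p t - p_d, v t⟫) - 2 * k₂ * W t := by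
    intro t ht
    have h1 : ⟪a t, v t⟫ = -(k₁ * ⟪p t - p_d, v t⟫) - k₂ * ⟪v t, v t⟫
        - k₃ * γ (Metric.infDist (p t) Xᶜ - ε) * (⟪η (p t), v t⟫ * ⟪η (p t), v t⟫) := by
      simp only [ha, inner_sub_left (𝕜 := ℝ), inner_neg_left, real_inner_smul_left]
      ring
    have h2 := mul_nonneg (mul_nonneg hk₃.le (hγnn _ (hsafe t ht)))
      (mul_self_nonneg ⟪η (p t), v t⟫)
    simp only [hWdef]
    linarith
  have hW0 : ∀ t, 0 ≤ W t := fun t => div_nonneg real_inner_self_nonneg zero_le_two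
  have hP0 : ∀ t, 0 ≤ ⟪p t - p_d, p t - p_d⟫ / 2 := fun t =>
    div_nonneg real_inner_self_nonneg zero_le_two
  have hE0 : ∀ t, 0 ≤ E t := fun t => add_nonneg (mul_nonneg hk₁.le (hP0 t)) (hW0 t)
  have hE' : ∀ t, 0 ≤ t → k₁ * ⟪p t - p_d, v t⟫ + ⟪a t, v t⟫ ≤ -(2 * k₂ * W t) := fun t ht => by
    linarith [hpow t ht]
  have hEle : ∀ t, 0 ≤ t → E t ≤ E 0 := by
    intro t ht
    refine antitoneOn_of_hasDerivWithinAt_nonpos (convex_Ici (0 : ℝ))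
      (fun s hs => (hEd s hs).continuousWithinAt)
      (fun s hs => (hEd s (interior_subset hs)).mono interior_subset) (fun s hs => ?_)
      Set.self_mem_Ici ht ht
    have h1 := hE' s (interior_subset hs)
    have := mul_nonneg (mul_nonneg zero_le_two hk₂.le) (hW0 s)
    linarith
  -- Young's inequality bounds `-k₁ ⟪p - p_d, v⟫` by the potential energy plus `k₁` times `W`.
  have hW' : ∀ t, 0 ≤ t → ⟪a t, v t⟫ ≤ (1 + k₁) * E 0 + 1 := by
    intro t ht
    have h1 : 0 ≤ ⟪p t - p_d, p t - p_d⟫ / 2 + W t + ⟪p t - p_d, v t⟫ := by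
      have := real_inner_self_nonneg (x := (p t - p_d) + v t)
      rw [real_inner_add_add_self] at this
      simp only [hWdef]
      linarith
    have h2 := hpow t ht
    have h3 := mul_nonneg hk₁.le h1
    have h4 := mul_nonneg hk₂.le (hW0 t)
    have h5 := hEle t ht
    have h6 : W t ≤ E t := le_add_of_nonneg_left (mul_nonneg hk₁.le (hP0 t))
    have h7 := mul_le_mul_of_nonneg_left (h6.trans h5) hk₁.le
    have h8 : E t = k₁ * (⟪p t - p_d, p t - p_d⟫ / 2) + W t := rfl
    have h9 := hW0 t
    linarith
  have hC : 0 < (1 + k₁) * E 0 + 1 := by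
    have := hE0 0
    positivity
  have hlim : Filter.Tendsto W Filter.atTop (nhds 0) :=
    tendsto_zero_of_dissipation hC (mul_pos zero_lt_two hk₂) (fun t _ => hW0 t)
      (fun t _ => hE0 t) hWd hEd hW' hE'
  rw [tendsto_zero_iff_norm_tendsto_zero]
  have h1 := (hlim.const_mul 2).sqrt
  rw [mul_zero, Real.sqrt_zero] at h1
  refine h1.congr fun t => ?_
  simp only [hWdef, real_inner_self_eq_norm_sq]
  rw [mul_div_cancel₀ _ (two_ne_zero), Real.sqrt_sq (norm_nonneg _)]
end

section
/- Convergence to the target when away from obstacles: For every DAF trajectory (p, v) on [0, ∞) such that there exists ε̄ > 0 with d(p(t)) ≥ ε̄ for all t ≥ 0, one has v(t) → 0 and p(t) → p_d as t → ∞; i.e., the trajectory converges to the desired equilibrium (p_d, 0). -/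
/-!
The safety margin keeps the trajectory where the damping coefficient `γ` is bounded: `γ` is
continuous on the compact interval `[εbar, ε₂]` and vanishes beyond it, while `‖η‖ = 1` wherever
`γ ≠ 0`. So with `q = p - p_d` the motion is `q'' = -k₁ q - k₂ q' - f`, where the avoidance term
`f` is dissipative (`⟪f, v⟫ ≥ 0`) and linearly bounded (`‖f‖ ≤ C ‖v‖`).

For such a damped oscillator the energy with a small cross term,
`V = k₁/2 ‖q‖² + 1/2 ‖v‖² + c ⟪q, v⟫`, is a strict Lyapunov function: it is comparable to
`k₁ ‖q‖² + ‖v‖²` and satisfies `V' ≤ -(c/2) V`. Hence `V`, and with it `(q, v)`, decays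
exponentially (`damped_oscillator_tendsto_zero`).
-/

open Set Filter Topology
open scoped RealInnerProductSpace

/-- A nonnegative function on `[0, ∞)` dominated by some `V` with `V' ≤ -μ V` tends to zero. -/
lemma tendsto_zero_of_deriv_le_neg_mul {V V' g : ℝ → ℝ} {μ : ℝ} (hμ : 0 < μ)
    (hV : ∀ t ∈ Ici (0 : ℝ), HasDerivWithinAt V (V' t) (Ici 0) t)
    (hV' : ∀ t ∈ Ici (0 : ℝ), V' t ≤ -μ * V t)
    (hg0 : ∀ t, 0 ≤ g t) (hg : ∀ t ∈ Ici (0 : ℝ), g t ≤ V t) :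
    Tendsto g atTop (𝓝 0) := by
  have hW : ∀ t ∈ Ici (0 : ℝ), HasDerivWithinAt (fun s => V s * Real.exp (μ * s))
      (V' t * Real.exp (μ * t) + V t * (Real.exp (μ * t) * μ)) (Ici 0) t := fun t ht =>
    (hV t ht).mul (((hasDerivAt_id t).const_mul μ).exp.hasDerivWithinAt.congr_deriv (by simp))
  have hanti : AntitoneOn (fun s => V s * Real.exp (μ * s)) (Ici 0) := by
    refine antitoneOn_of_hasDerivWithinAt_nonpos (convex_Ici 0)
      (fun t ht => (hW t ht).continuousWithinAt)
      (fun t ht => (hW t (interior_subset ht)).mono interior_subset) (fun t ht => ?_)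
    have h := hV' t (interior_subset ht)
    nlinarith [Real.exp_pos (μ * t)]
  have hbd : ∀ t ∈ Ici (0 : ℝ), g t ≤ V 0 * Real.exp (-(μ * t)) := by
    intro t ht
    have h : V t * Real.exp (μ * t) ≤ V 0 := by
      simpa using hanti (self_mem_Ici) ht ht
    rw [Real.exp_neg, ← div_eq_mul_inv, le_div_iff₀ (Real.exp_pos _)]
    exact (mul_le_mul_of_nonneg_right (hg t ht) (Real.exp_pos _).le).trans h
  have hlim : Tendsto (fun t => V 0 * Real.exp (-(μ * t))) atTop (𝓝 0) := by
    have := (Real.tendsto_exp_neg_atTop_nhds_zero.comp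
      (tendsto_id.const_mul_atTop hμ)).const_mul (V 0)
    simpa using this
  exact squeeze_zero' (Eventually.of_forall hg0)
    ((eventually_ge_atTop 0).mono fun t ht => hbd t ht) hlim

/-- Exponential stability of the oscillator `q'' = -k₁ q - k₂ q' - f`, for a dissipative
perturbation `f` of at most linear size in the velocity. -/
lemma damped_oscillator_tendsto_zero {E : Type*} [NormedAddCommGroup E] [InnerProductSpace ℝ E]
    {q v f : ℝ → E} {k₁ k₂ C : ℝ} (hk₁ : 0 < k₁) (hk₂ : 0 < k₂) (hC : 0 ≤ C)
    (hq : ∀ t ∈ Ici (0 : ℝ), HasDerivWithinAt q (v t) (Ici 0) t)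
    (hv : ∀ t ∈ Ici (0 : ℝ), HasDerivWithinAt v (-(k₁ • q t) - k₂ • v t - f t) (Ici 0) t)
    (hf : ∀ t ∈ Ici (0 : ℝ), 0 ≤ ⟪v t, f t⟫)
    (hfC : ∀ t ∈ Ici (0 : ℝ), ‖f t‖ ≤ C * ‖v t‖) :
    Tendsto v atTop (𝓝 0) ∧ Tendsto q atTop (𝓝 0) := by
  set B := k₂ + C with hB
  -- `c ^ 2 ≤ k₁ / 4` makes `V` positive definite; `c * (1 + B ^ 2 / (2 * k₁)) ≤ k₂ / 2` lets the
  -- damping absorb the terms produced by differentiating the cross term.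
  obtain ⟨c, hc, hc1, hc2⟩ : ∃ c : ℝ, 0 < c ∧ c ^ 2 ≤ k₁ / 4 ∧
      c * (1 + B ^ 2 / (2 * k₁)) ≤ k₂ / 2 := by
    have hK : 0 < 1 + B ^ 2 / (2 * k₁) := by positivity
    refine ⟨min (√k₁ / 2) (k₂ / 2 / (1 + B ^ 2 / (2 * k₁))), by positivity, ?_, ?_⟩
    · calc _ ≤ (√k₁ / 2) ^ 2 := by gcongr; exact min_le_left _ _
        _ = k₁ / 4 := by rw [div_pow, Real.sq_sqrt hk₁.le]; norm_num
    · rw [← le_div_iff₀ hK]; exact min_le_right _ _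
  have hck : c ≤ k₂ / 2 := by
    have : 0 ≤ c * (B ^ 2 / (2 * k₁)) := by positivity
    linarith
  have hcross : ∀ a b x : ℝ, |x| ≤ a * b → c * |x| ≤ k₁ / 4 * a ^ 2 + 1 / 4 * b ^ 2 := by
    intro a b x hx
    have h1 : c * |x| ≤ c * (a * b) := by gcongr
    have h2 : c * (a * b) ≤ k₁ / 4 * a ^ 2 + c ^ 2 / k₁ * b ^ 2 := by
      have : k₁ / 4 * a ^ 2 + c ^ 2 / k₁ * b ^ 2 - c * (a * b)
          = (k₁ * a / 2 - c * b) ^ 2 / k₁ := by field_simp; ring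
      have : 0 ≤ (k₁ * a / 2 - c * b) ^ 2 / k₁ := by positivity
      linarith
    have h3 : c ^ 2 / k₁ ≤ 1 / 4 := by rw [div_le_iff₀ hk₁]; linarith
    nlinarith [sq_nonneg b]
  have hVlow : ∀ t, 1 / 4 * (k₁ * ‖q t‖ ^ 2 + ‖v t‖ ^ 2) ≤
      k₁ / 2 * ‖q t‖ ^ 2 + 1 / 2 * ‖v t‖ ^ 2 + c * ⟪q t, v t⟫ := by
    intro t
    have h := hcross _ _ _ (abs_real_inner_le_norm (q t) (v t))
    nlinarith [neg_abs_le ⟪q t, v t⟫]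
  have hVup : ∀ t, k₁ / 2 * ‖q t‖ ^ 2 + 1 / 2 * ‖v t‖ ^ 2 + c * ⟪q t, v t⟫ ≤
      k₁ * ‖q t‖ ^ 2 + ‖v t‖ ^ 2 := by
    intro t
    have h := hcross _ _ _ (abs_real_inner_le_norm (q t) (v t))
    have h1 : 0 ≤ k₁ * ‖q t‖ ^ 2 := by positivity
    nlinarith [le_abs_self ⟪q t, v t⟫, sq_nonneg ‖v t‖]
  have key : Tendsto (fun t => 1 / 4 * (k₁ * ‖q t‖ ^ 2 + ‖v t‖ ^ 2)) atTop (𝓝 0) := by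
    refine tendsto_zero_of_deriv_le_neg_mul (half_pos hc)
      (fun t ht => ((((hq t ht).norm_sq).const_mul (k₁ / 2)).add
        (((hv t ht).norm_sq).const_mul (1 / 2))).add
        (((hq t ht).inner ℝ (hv t ht)).const_mul c))
      (fun t ht => ?_) (fun t => by positivity) (fun t _ => hVlow t)
    have hup := hVup t
    simp only [Pi.add_apply, inner_sub_right, inner_neg_right, inner_smul_right,
      real_inner_self_eq_norm_sq, real_inner_comm (q t) (v t)]
    have hfv := hf t ht
    have h1 : |⟪q t, v t⟫| ≤ ‖q t‖ * ‖v t‖ := abs_real_inner_le_norm _ _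
    have h2 : |⟪q t, f t⟫| ≤ ‖q t‖ * (C * ‖v t‖) :=
      (abs_real_inner_le_norm _ _).trans (by gcongr; exact hfC t ht)
    have h3 : -(k₂ * ⟪q t, v t⟫) - ⟪q t, f t⟫ ≤ B * (‖q t‖ * ‖v t‖) := by
      nlinarith [neg_abs_le ⟪q t, v t⟫, neg_abs_le ⟪q t, f t⟫]
    have h4 : B * (‖q t‖ * ‖v t‖) ≤ k₁ / 2 * ‖q t‖ ^ 2 + B ^ 2 / (2 * k₁) * ‖v t‖ ^ 2 := by
      have : k₁ / 2 * ‖q t‖ ^ 2 + B ^ 2 / (2 * k₁) * ‖v t‖ ^ 2 - B * (‖q t‖ * ‖v t‖)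
          = (k₁ * ‖q t‖ - B * ‖v t‖) ^ 2 / (2 * k₁) := by field_simp; ring
      have : 0 ≤ (k₁ * ‖q t‖ - B * ‖v t‖) ^ 2 / (2 * k₁) := by positivity
      linarith
    have h5 := mul_le_mul_of_nonneg_left (h3.trans h4) hc.le
    have h6 := mul_le_mul_of_nonneg_right hc2 (sq_nonneg ‖v t‖)
    have h7 := mul_le_mul_of_nonneg_right hck (sq_nonneg ‖v t‖)
    have h8 := mul_le_mul_of_nonneg_left hup (half_pos hc).le
    have h9 : 0 ≤ k₂ * ‖v t‖ ^ 2 := by positivity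
    nlinarith
  have hsq : ∀ {g : ℝ → E} {K : ℝ},
      (∀ t, ‖g t‖ ^ 2 ≤ K * (1 / 4 * (k₁ * ‖q t‖ ^ 2 + ‖v t‖ ^ 2))) →
      Tendsto g atTop (𝓝 0) := by
    intro g K hg
    have h : Tendsto (fun t => ‖g t‖ ^ 2) atTop (𝓝 0) :=
      squeeze_zero (fun t => by positivity) hg (by simpa using key.const_mul K)
    refine tendsto_zero_iff_norm_tendsto_zero.2 ?_
    simpa using h.sqrt
  constructor
  · refine hsq (K := 4) fun t => ?_
    have : 0 ≤ k₁ * ‖q t‖ ^ 2 := by positivity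
    linarith
  · refine hsq (K := 4 / k₁) fun t => ?_
    have : 4 / k₁ * (1 / 4 * (k₁ * ‖q t‖ ^ 2 + ‖v t‖ ^ 2)) = ‖q t‖ ^ 2 + ‖v t‖ ^ 2 / k₁ := by
      field_simp
    have : 0 ≤ ‖v t‖ ^ 2 / k₁ := by positivity
    linarith


theorem daf_convergence_to_target {n : ℕ}
    (X : Set (EuclideanSpace ℝ (Fin n))) (hX : IsClosed X) (hXne : Xᶜ.Nonempty)
    (ε k₁ k₂ k₃ ε₁ ε₂ ρ M : ℝ)
    (hε : 0 < ε) (hk₁ : 0 < k₁) (hk₂ : 0 < k₂) (hk₃ : 0 < k₃)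
    (hε₁ : 0 < ε₁) (hε₁₂ : ε₁ < ε₂) (hρ : ε + ε₂ < ρ) (hM : 0 < M)
    (p_d : EuclideanSpace ℝ (Fin n)) (hpd : 0 < Metric.infDist p_d Xᶜ - ε)
    (γ : ℝ → ℝ)
    (hγnn : ∀ z, 0 < z → 0 ≤ γ z)
    (hγC1 : ContDiffOn ℝ 1 γ (Set.Ioi (0:ℝ)))
    (hγinv : ∀ z, 0 < z → z < ε₁ → γ z = 1 / z)
    (hγzero : ∀ z, ε₂ ≤ z → γ z = 0)
    (η : EuclideanSpace ℝ (Fin n) → EuclideanSpace ℝ (Fin n))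
    (H : EuclideanSpace ℝ (Fin n) → EuclideanSpace ℝ (Fin n) →L[ℝ] EuclideanSpace ℝ (Fin n))
    (hgrad : ∀ x : EuclideanSpace ℝ (Fin n), 0 < Metric.infDist x Xᶜ → Metric.infDist x Xᶜ < ρ →
      HasGradientAt (fun y : EuclideanSpace ℝ (Fin n) => Metric.infDist y Xᶜ) (η x) x)
    (hunit : ∀ x : EuclideanSpace ℝ (Fin n), 0 < Metric.infDist x Xᶜ → Metric.infDist x Xᶜ < ρ → ‖η x‖ = 1)
    (hhess : ∀ x : EuclideanSpace ℝ (Fin n), 0 < Metric.infDist x Xᶜ → Metric.infDist x Xᶜ < ρ →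
      HasFDerivAt η (H x) x)
    (hHcont : ContinuousOn H {x : EuclideanSpace ℝ (Fin n) |
      0 < Metric.infDist x Xᶜ ∧ Metric.infDist x Xᶜ < ρ})
    (hHsa : ∀ x : EuclideanSpace ℝ (Fin n), 0 < Metric.infDist x Xᶜ → Metric.infDist x Xᶜ < ρ →
      ∀ a b : EuclideanSpace ℝ (Fin n), ⟪H x a, b⟫ = ⟪a, H x b⟫)
    (hHbd : ∀ x : EuclideanSpace ℝ (Fin n), 0 < Metric.infDist x Xᶜ → Metric.infDist x Xᶜ < ρ →
      ‖H x‖ ≤ M)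
    (p v : ℝ → EuclideanSpace ℝ (Fin n))
    (hp : ∀ t ∈ Set.Ici (0:ℝ), HasDerivWithinAt p (v t) (Set.Ici (0:ℝ)) t)
    (hv : ∀ t ∈ Set.Ici (0:ℝ), HasDerivWithinAt v
      (-(k₁ • (p t - p_d)) - k₂ • v t
        - (k₃ * γ (Metric.infDist (p t) Xᶜ - ε) * ⟪η (p t), v t⟫) • η (p t)) (Set.Ici (0:ℝ)) t)
    (εbar : ℝ) (hεbar : 0 < εbar)
    (hsafe : ∀ t ∈ Set.Ici (0:ℝ), εbar ≤ Metric.infDist (p t) Xᶜ - ε) :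
    Filter.Tendsto v Filter.atTop (nhds 0) ∧
    Filter.Tendsto p Filter.atTop (nhds p_d) := by
  obtain ⟨G, hG0, hG⟩ : ∃ G, 0 ≤ G ∧ ∀ z, εbar ≤ z → γ z ≤ G := by
    have hcont : ContinuousOn γ (Icc εbar ε₂) :=
      hγC1.continuousOn.mono fun z hz => hεbar.trans_le hz.1
    obtain ⟨G, hG⟩ := isCompact_Icc.bddAbove_image hcont
    refine ⟨max G 0, le_max_right _ _, fun z hz => ?_⟩
    rcases le_total z ε₂ with h | h
    · exact (hG (mem_image_of_mem _ ⟨hz, h⟩)).trans (le_max_left _ _)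
    · rw [hγzero z h]; exact le_max_right _ _
  have hcoef : ∀ t ∈ Ici (0 : ℝ), 0 ≤ γ (Metric.infDist (p t) Xᶜ - ε) := fun t ht =>
    hγnn _ (hεbar.trans_le (hsafe t ht))
  have main := damped_oscillator_tendsto_zero (q := fun t => p t - p_d) (v := v)
    (f := fun t => (k₃ * γ (Metric.infDist (p t) Xᶜ - ε) * ⟪η (p t), v t⟫) • η (p t))
    (C := k₃ * G) hk₁ hk₂ (by positivity) (fun t ht => (hp t ht).sub_const p_d) hv
    (fun t ht => by
      have := hcoef t ht
      rw [inner_smul_right, real_inner_comm, mul_assoc]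
      exact mul_nonneg (by positivity) (mul_self_nonneg _))
    (fun t ht => by
      have h0 := hcoef t ht
      have hs := hsafe t ht
      rcases le_or_gt ε₂ (Metric.infDist (p t) Xᶜ - ε) with h | h
      · rw [hγzero _ h]
        simp only [mul_zero, zero_mul, zero_smul, norm_zero]
        positivity
      · have hη : ‖η (p t)‖ = 1 := hunit _ (by linarith) (by linarith)
        have hin : |⟪η (p t), v t⟫| ≤ ‖v t‖ := by
          simpa [hη] using abs_real_inner_le_norm (η (p t)) (v t)
        rw [norm_smul, hη, mul_one, Real.norm_eq_abs, abs_mul,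
          abs_of_nonneg (mul_nonneg hk₃.le h0)]
        gcongr
        exact hG _ hs)
  exact ⟨main.1, by simpa using main.2.add_const p_d⟩
end

section
/- Alignment with the normal (Equation (28)): For every DAF trajectory (p, v) on [0, ∞) with d(p(t)) > 0 for all t ≥ 0, if v(t) → 0 and d(p(t)) → 0 as t → ∞, then the tangential component of the position error vanishes asymptotically: (p(t) − p_d) − ⟪η(p(t)), p(t) − p_d⟫ η(p(t)) → 0 as t → ∞; i.e., p(t) − p_d becomes asymptotically parallel to η(p(t)). -/
open scoped RealInnerProductSpace

/-!
The energy `k₁ ‖p - p_d‖² + ‖v‖²` is nonincreasing, because both the viscous term and the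
barrier term `-k₃ γ ⟪η, v⟫ η` dissipate; hence `p` stays bounded (`position_error_bounded`).

Write `w` for the tangential part of `p - p_d` and `u` for the tangential part of `v`, with respect
to the unit normal `η (p t)`. The singular barrier term is normal to the boundary, so it disappears
from the derivative of `u`, which is `-k₁ w` plus terms bounded by a multiple of `‖v‖ + ‖v‖²`
(the Hessian bound controls the rotation of `η`). Likewise `w'` is bounded by a multiple of
`‖v‖ (1 + ‖p - p_d‖)`. Thus `u → 0`, `u' + k₁ w → 0` and `w' → 0`, and a Barbalat-type argument,
`tendsto_zero_of_deriv`, gives `w → 0`.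
-/

/-- If `u → 0` and `u' = -k w + e` with `e → 0` and `w' → 0`, then `w → 0`. Over `[t, t + 1]` the
function `w` is almost constant, so `k w t` is close to `u t - u (t + 1)`, which is small. -/
theorem tendsto_zero_of_deriv {E : Type*} [NormedAddCommGroup E] [NormedSpace ℝ E]
    {k T : ℝ} (hk : 0 < k) {u w e w' : ℝ → E}
    (hu : ∀ t, T ≤ t → HasDerivAt u (-(k • w t) + e t) t)
    (hw : ∀ t, T ≤ t → HasDerivAt w (w' t) t)
    (hu0 : Filter.Tendsto u Filter.atTop (nhds 0))
    (he0 : Filter.Tendsto e Filter.atTop (nhds 0))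
    (hw0 : Filter.Tendsto w' Filter.atTop (nhds 0)) :
    Filter.Tendsto w Filter.atTop (nhds 0) := by
  rw [Metric.tendsto_atTop] at *
  intro r hr
  -- The four error contributions are `δ`, `δ`, `δ` and `k δ`, together below `k r`.
  set δ : ℝ := k * r / (2 * (3 + k)) with hδdef
  have hδ : 0 < δ := by positivity
  obtain ⟨A, hA⟩ := hu0 δ hδ
  obtain ⟨B, hB⟩ := he0 δ hδ
  obtain ⟨C, hC⟩ := hw0 δ hδ
  simp only [dist_zero_right] at hA hB hC ⊢
  refine ⟨max T (max A (max B C)), fun t ht => ?_⟩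
  simp only [ge_iff_le, max_le_iff] at ht
  obtain ⟨hT, htA, htB, htC⟩ := ht
  have hwt : ∀ s ∈ Set.Icc t (t + 1), ‖w s - w t‖ ≤ δ := by
    intro s hs
    have := norm_image_sub_le_of_norm_deriv_le_segment' (f := w) (f' := w') (C := δ)
      (a := t) (b := t + 1) (fun x hx => (hw x (hT.trans hx.1)).hasDerivWithinAt)
      (fun x hx => (hC x (htC.trans hx.1)).le) s hs
    nlinarith [hs.2]
  have hmv := norm_image_sub_le_of_norm_deriv_le_segment'
    (f := fun s => u s + (k * s) • w t)
    (f' := fun s => (-(k • w s) + e s) + k • w t) (C := δ + k * δ) (a := t) (b := t + 1)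
    (fun x hx => by
      have h1 : HasDerivAt (fun s : ℝ => (k * s) • w t) (k • w t) x := by
        simpa using (((hasDerivAt_id x).const_mul k).smul_const (w t))
      exact ((hu x (hT.trans hx.1)).add h1).hasDerivWithinAt)
    (fun x hx => by
      have h1 := hwt x ⟨hx.1, hx.2.le⟩
      have h2 := (hB x (htB.trans hx.1)).le
      have h3 : (-(k • w x) + e x) + k • w t = e x - k • (w x - w t) := by
        rw [smul_sub]; abel
      rw [h3]
      refine (norm_sub_le _ _).trans (add_le_add h2 ?_)
      rw [norm_smul, Real.norm_of_nonneg hk.le]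
      exact mul_le_mul_of_nonneg_left h1 hk.le) (t + 1) ⟨by linarith, le_refl _⟩
  have hA1 := hA t htA
  have hA2 := hA (t + 1) (by linarith)
  have h4 : k • w t = (u (t + 1) + (k * (t + 1)) • w t - (u t + (k * t) • w t))
      - u (t + 1) + u t := by
    rw [mul_add, add_smul, mul_one]; abel
  have h5 : k * ‖w t‖ ≤ (δ + k * δ) + δ + δ := by
    calc k * ‖w t‖ = ‖k • w t‖ := by rw [norm_smul, Real.norm_of_nonneg hk.le]
      _ ≤ _ := by
        rw [h4]
        refine (norm_add_le _ _).trans (add_le_add ((norm_sub_le _ _).trans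
          (add_le_add ?_ hA2.le)) hA1.le)
        linarith
  have h6 : (δ + k * δ) + δ + δ = k * r / 2 := by
    rw [hδdef]; field_simp; ring
  rw [h6] at h5
  nlinarith [mul_pos hk hr]

/-- A damped oscillator whose extra force is `-c η` with `c ⟪η, v⟫ ≥ 0` has bounded position error,
since its energy `k₁ ‖q‖² + ‖v‖²` is nonincreasing. -/
theorem position_error_bounded {E : Type*} [NormedAddCommGroup E] [InnerProductSpace ℝ E]
    {k₁ k₂ : ℝ} (hk₁ : 0 < k₁) (hk₂ : 0 < k₂) {q v η : ℝ → E} {c : ℝ → ℝ}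
    (hq : ∀ t ∈ Set.Ici (0:ℝ), HasDerivWithinAt q (v t) (Set.Ici (0:ℝ)) t)
    (hv : ∀ t ∈ Set.Ici (0:ℝ), HasDerivWithinAt v
      (-(k₁ • q t) - k₂ • v t - c t • η t) (Set.Ici (0:ℝ)) t)
    (hc : ∀ t, 0 ≤ t → 0 ≤ c t * ⟪η t, v t⟫) :
    ∃ R, 0 ≤ R ∧ ∀ t, 0 ≤ t → ‖q t‖ ≤ R := by
  have hV : ∀ t ∈ Set.Ici (0:ℝ), HasDerivWithinAt (fun t => k₁ * ⟪q t, q t⟫ + ⟪v t, v t⟫)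
      (-2 * (k₂ * ⟪v t, v t⟫ + c t * ⟪η t, v t⟫)) (Set.Ici (0:ℝ)) t := by
    intro t ht
    refine ((((hq t ht).inner ℝ (hq t ht)).const_mul k₁).add
      ((hv t ht).inner ℝ (hv t ht))).congr_deriv ?_
    simp only [inner_sub_left, inner_sub_right, inner_neg_left, inner_neg_right,
      real_inner_smul_left, real_inner_smul_right]
    rw [real_inner_comm (v t) (q t), real_inner_comm (v t) (η t)]
    ring
  have hanti : AntitoneOn (fun t => k₁ * ⟪q t, q t⟫ + ⟪v t, v t⟫) (Set.Ici (0:ℝ)) := by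
    refine antitoneOn_of_hasDerivWithinAt_nonpos (convex_Ici 0)
      (fun t ht => (hV t ht).continuousWithinAt)
      (fun t ht => (hV t (interior_subset ht)).mono interior_subset) (fun t ht => ?_)
    have h1 := hc t (interior_subset ht)
    have h2 : 0 ≤ k₂ * ⟪v t, v t⟫ := mul_nonneg hk₂.le real_inner_self_nonneg
    linarith
  set V₀ : ℝ := k₁ * ⟪q 0, q 0⟫ + ⟪v 0, v 0⟫ with hV₀
  refine ⟨√(V₀ / k₁), Real.sqrt_nonneg _, fun t ht => ?_⟩
  have h := hanti (Set.mem_Ici.2 le_rfl) (Set.mem_Ici.2 ht) ht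
  simp only [← hV₀] at h
  refine Real.le_sqrt_of_sq_le ?_
  rw [le_div_iff₀ hk₁, ← real_inner_self_eq_norm_sq]
  have : 0 ≤ ⟪v t, v t⟫ := real_inner_self_nonneg
  linarith

/-- Derivative of the tangential component `a - ⟪η, a⟫ η` of a moving vector `a` with respect to a
moving normal `η`. -/
theorem hasDerivAt_tangential {E : Type*} [NormedAddCommGroup E] [InnerProductSpace ℝ E]
    {a η : ℝ → E} {a' η' : E} {t : ℝ} (ha : HasDerivAt a a' t) (hη : HasDerivAt η η' t) :
    HasDerivAt (fun s => a s - ⟪η s, a s⟫ • η s)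
      (a' - ⟪η t, a'⟫ • η t - (⟪η', a t⟫ • η t + ⟪η t, a t⟫ • η')) t := by
  refine (ha.sub ((hη.inner ℝ ha).smul hη)).congr_deriv ?_
  rw [add_smul]; abel

theorem norm_tangential_le {E : Type*} [NormedAddCommGroup E] [InnerProductSpace ℝ E]
    {a η : E} (hη : ‖η‖ = 1) : ‖a - ⟪η, a⟫ • η‖ ≤ 2 * ‖a‖ := by
  have h := abs_real_inner_le_norm η a
  rw [hη, one_mul] at h
  calc ‖a - ⟪η, a⟫ • η‖ ≤ ‖a‖ + ‖⟪η, a⟫ • η‖ := norm_sub_le _ _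
    _ ≤ 2 * ‖a‖ := by rw [norm_smul, hη, Real.norm_eq_abs]; linarith

/-- Bound on the part of the derivative of a tangential component that comes from the rotation of
the normal. -/
theorem norm_rotation_le {E : Type*} [NormedAddCommGroup E] [InnerProductSpace ℝ E]
    {a η η' : E} (hη : ‖η‖ = 1) :
    ‖⟪η', a⟫ • η + ⟪η, a⟫ • η'‖ ≤ 2 * ‖η'‖ * ‖a‖ := by
  have h1 := abs_real_inner_le_norm η' a
  have h2 := abs_real_inner_le_norm η a
  rw [hη, one_mul] at h2
  refine (norm_add_le _ _).trans ?_
  rw [norm_smul, norm_smul, hη, Real.norm_eq_abs, Real.norm_eq_abs]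
  nlinarith [norm_nonneg η']

theorem daf_alignment_with_normal {n : ℕ}
    (X : Set (EuclideanSpace ℝ (Fin n))) (hX : IsClosed X) (hXne : Xᶜ.Nonempty)
    (ε k₁ k₂ k₃ ε₁ ε₂ ρ M : ℝ)
    (hε : 0 < ε) (hk₁ : 0 < k₁) (hk₂ : 0 < k₂) (hk₃ : 0 < k₃)
    (hε₁ : 0 < ε₁) (hε₁₂ : ε₁ < ε₂) (hρ : ε + ε₂ < ρ) (hM : 0 < M)
    (p_d : EuclideanSpace ℝ (Fin n)) (hpd : 0 < Metric.infDist p_d Xᶜ - ε)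
    (γ : ℝ → ℝ)
    (hγnn : ∀ z, 0 < z → 0 ≤ γ z)
    (hγC1 : ContDiffOn ℝ 1 γ (Set.Ioi (0:ℝ)))
    (hγinv : ∀ z, 0 < z → z < ε₁ → γ z = 1 / z)
    (hγzero : ∀ z, ε₂ ≤ z → γ z = 0)
    (η : EuclideanSpace ℝ (Fin n) → EuclideanSpace ℝ (Fin n))
    (H : EuclideanSpace ℝ (Fin n) → EuclideanSpace ℝ (Fin n) →L[ℝ] EuclideanSpace ℝ (Fin n))
    (hgrad : ∀ x : EuclideanSpace ℝ (Fin n), 0 < Metric.infDist x Xᶜ → Metric.infDist x Xᶜ < ρ →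
      HasGradientAt (fun y : EuclideanSpace ℝ (Fin n) => Metric.infDist y Xᶜ) (η x) x)
    (hunit : ∀ x : EuclideanSpace ℝ (Fin n), 0 < Metric.infDist x Xᶜ → Metric.infDist x Xᶜ < ρ → ‖η x‖ = 1)
    (hhess : ∀ x : EuclideanSpace ℝ (Fin n), 0 < Metric.infDist x Xᶜ → Metric.infDist x Xᶜ < ρ →
      HasFDerivAt η (H x) x)
    (hHcont : ContinuousOn H {x : EuclideanSpace ℝ (Fin n) |
      0 < Metric.infDist x Xᶜ ∧ Metric.infDist x Xᶜ < ρ})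
    (hHsa : ∀ x : EuclideanSpace ℝ (Fin n), 0 < Metric.infDist x Xᶜ → Metric.infDist x Xᶜ < ρ →
      ∀ a b : EuclideanSpace ℝ (Fin n), ⟪H x a, b⟫ = ⟪a, H x b⟫)
    (hHbd : ∀ x : EuclideanSpace ℝ (Fin n), 0 < Metric.infDist x Xᶜ → Metric.infDist x Xᶜ < ρ →
      ‖H x‖ ≤ M)
    (p v : ℝ → EuclideanSpace ℝ (Fin n))
    (hp : ∀ t ∈ Set.Ici (0:ℝ), HasDerivWithinAt p (v t) (Set.Ici (0:ℝ)) t)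
    (hv : ∀ t ∈ Set.Ici (0:ℝ), HasDerivWithinAt v
      (-(k₁ • (p t - p_d)) - k₂ • v t
        - (k₃ * γ (Metric.infDist (p t) Xᶜ - ε) * ⟪η (p t), v t⟫) • η (p t)) (Set.Ici (0:ℝ)) t)
    (hsafe : ∀ t ∈ Set.Ici (0:ℝ), 0 < Metric.infDist (p t) Xᶜ - ε)
    (hv0 : Filter.Tendsto v Filter.atTop (nhds 0))
    (hd0 : Filter.Tendsto (fun t => Metric.infDist (p t) Xᶜ - ε) Filter.atTop (nhds 0)) :
    Filter.Tendsto
      (fun t => (p t - p_d) - ⟪η (p t), p t - p_d⟫ • η (p t))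
      Filter.atTop (nhds 0) := by
  obtain ⟨R, hR0, hR⟩ := position_error_bounded (q := fun t => p t - p_d) (v := v)
    (η := fun t => η (p t))
    (c := fun t => k₃ * γ (Metric.infDist (p t) Xᶜ - ε) * ⟪η (p t), v t⟫) hk₁ hk₂
    (fun t ht => (hp t ht).sub_const p_d) hv (fun t ht => by
      have h1 := hγnn _ (hsafe t ht)
      simp only [mul_assoc]
      exact mul_nonneg hk₃.le (mul_nonneg h1 (mul_self_nonneg _)))
  -- Eventually the trajectory stays in the region where `infDist · Xᶜ` is twice differentiable.
  have hev : ∀ᶠ t in Filter.atTop, Metric.infDist (p t) Xᶜ - ε < ρ - ε :=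
    hd0.eventually_lt_const (by linarith)
  obtain ⟨T, hT⟩ := Filter.eventually_atTop.1 (hev.and (Filter.eventually_gt_atTop (0:ℝ)))
  have hpos : ∀ t, T ≤ t → 0 < t := fun t ht => (hT t ht).2
  have hlo : ∀ t, T ≤ t → 0 < Metric.infDist (p t) Xᶜ := fun t ht => by
    have := hsafe t (hpos t ht).le
    linarith
  have hhi : ∀ t, T ≤ t → Metric.infDist (p t) Xᶜ < ρ := fun t ht => by
    have := (hT t ht).1
    linarith
  have hun : ∀ t, T ≤ t → ‖η (p t)‖ = 1 := fun t ht => hunit _ (hlo t ht) (hhi t ht)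
  have hp' : ∀ t, T ≤ t → HasDerivAt p (v t) t := fun t ht =>
    (hp t (hpos t ht).le).hasDerivAt (Ici_mem_nhds (hpos t ht))
  have hv' := fun t (ht : T ≤ t) =>
    (hv t (hpos t ht).le).hasDerivAt (Ici_mem_nhds (hpos t ht))
  have hη' : ∀ t, T ≤ t → HasDerivAt (fun s => η (p s)) (H (p t) (v t)) t := fun t ht =>
    (hhess _ (hlo t ht) (hhi t ht)).comp_hasDerivAt t (hp' t ht)
  have hHv : ∀ t, T ≤ t → ‖H (p t) (v t)‖ ≤ M * ‖v t‖ := fun t ht =>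
    (H (p t)).le_of_opNorm_le (hHbd _ (hlo t ht) (hhi t ht)) _
  have hnv : Filter.Tendsto (fun t => ‖v t‖) Filter.atTop (nhds 0) := by
    simpa using hv0.norm
  refine tendsto_zero_of_deriv (k := k₁) (T := T) hk₁
    (u := fun t => v t - ⟪η (p t), v t⟫ • η (p t))
    (e := fun t => -(k₂ • (v t - ⟪η (p t), v t⟫ • η (p t)))
      - (⟪H (p t) (v t), v t⟫ • η (p t) + ⟪η (p t), v t⟫ • H (p t) (v t)))
    (w' := fun t => v t - ⟪η (p t), v t⟫ • η (p t)
      - (⟪H (p t) (v t), p t - p_d⟫ • η (p t) + ⟪η (p t), p t - p_d⟫ • H (p t) (v t)))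
    (fun t ht => ?_) (fun t ht => ?_) ?_ ?_ ?_
  · refine (hasDerivAt_tangential (hv' t ht) (hη' t ht)).congr_deriv ?_
    -- `‖η‖ = 1` makes the barrier force purely normal, so it cancels.
    have h1 : ⟪η (p t), η (p t)⟫ = (1:ℝ) := by
      rw [real_inner_self_eq_norm_sq, hun t ht, one_pow]
    generalize k₃ * γ (Metric.infDist (p t) Xᶜ - ε) * ⟪η (p t), v t⟫ = c
    simp only [inner_sub_right, inner_neg_right, real_inner_smul_right, h1]
    module
  · exact hasDerivAt_tangential ((hp' t ht).sub_const p_d) (hη' t ht)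
  · refine squeeze_zero_norm' (a := fun t => 2 * ‖v t‖) ?_ (by simpa using hnv.const_mul 2)
    filter_upwards [Filter.eventually_ge_atTop T] with t ht
    exact norm_tangential_le (hun t ht)
  · refine squeeze_zero_norm' (a := fun t => k₂ * (2 * ‖v t‖) + 2 * (M * ‖v t‖) * ‖v t‖) ?_ ?_
    · filter_upwards [Filter.eventually_ge_atTop T] with t ht
      refine (norm_sub_le _ _).trans (add_le_add ?_ ?_)
      · rw [norm_neg, norm_smul, Real.norm_of_nonneg hk₂.le]
        exact mul_le_mul_of_nonneg_left (norm_tangential_le (hun t ht)) hk₂.le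
      · refine (norm_rotation_le (hun t ht)).trans ?_
        gcongr
        exact hHv t ht
    · simpa using ((hnv.const_mul 2).const_mul k₂).add (((hnv.const_mul M).const_mul 2).mul hnv)
  · refine squeeze_zero_norm' (a := fun t => 2 * ‖v t‖ + 2 * (M * ‖v t‖) * R) ?_ ?_
    · filter_upwards [Filter.eventually_ge_atTop T] with t ht
      refine (norm_sub_le _ _).trans (add_le_add (norm_tangential_le (hun t ht)) ?_)
      refine (norm_rotation_le (hun t ht)).trans ?_
      gcongr
      · exact hHv t ht
      · exact hR t (hpos t ht).le
    · simpa using (hnv.const_mul 2).add (((hnv.const_mul M).const_mul 2).mul_const R)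
end

section
/- Limit of the dissipative term Φ: Let (p, v) be a DAF trajectory on [0, ∞) with d(p(t)) > 0 and p(t) ∈ U for all t ≥ 0. Suppose p(t) → p* with d(p*) = 0, v(t) → 0, and that the function t ↦ d(p(t)) is twice differentiable with first derivative tending to 0 and second derivative tending to 0 as t → ∞. Then Φ(t) := γ(d(p(t))) ⟪η(p(t)), v(t)⟫ converges, as t → ∞, to −(k₁/k₃) ⟪η(p*), p* − p_d⟫. -/
/-!
Along a DAF trajectory the chain rule gives `d' = ⟪η(p), v⟫`. Differentiating once more, inserting the
equation of motion and using `‖η‖ = 1` yields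
`d'' = ⟪H(p) v, v⟫ - k₁ ⟪η(p), p - p_d⟫ - k₂ ⟪η(p), v⟫ - k₃ Φ`.
This is solved for `Φ`, where `d''`, `⟪η(p), v⟫ = d'` and `⟪H(p) v, v⟫` (bounded by `M ‖v‖²`) all tend
to zero. The limit point lies in the region where `η` is differentiable, since its distance to the
obstacles is `ε ∈ (0, ρ)`, so `η(p) → η(p*)` and only the `k₁` term survives.
-/


open scoped RealInnerProductSpace

theorem daf_Phi_limit {n : ℕ}
    (X : Set (EuclideanSpace ℝ (Fin n))) (hX : IsClosed X) (hXne : Xᶜ.Nonempty)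
    (ε k₁ k₂ k₃ ε₁ ε₂ ρ M : ℝ)
    (hε : 0 < ε) (hk₁ : 0 < k₁) (hk₂ : 0 < k₂) (hk₃ : 0 < k₃)
    (hε₁ : 0 < ε₁) (hε₁₂ : ε₁ < ε₂) (hρ : ε + ε₂ < ρ) (hM : 0 < M)
    (p_d : EuclideanSpace ℝ (Fin n)) (hpd : 0 < Metric.infDist p_d Xᶜ - ε)
    (γ : ℝ → ℝ)
    (hγnn : ∀ z, 0 < z → 0 ≤ γ z)
    (hγC1 : ContDiffOn ℝ 1 γ (Set.Ioi (0:ℝ)))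
    (hγinv : ∀ z, 0 < z → z < ε₁ → γ z = 1 / z)
    (hγzero : ∀ z, ε₂ ≤ z → γ z = 0)
    (η : EuclideanSpace ℝ (Fin n) → EuclideanSpace ℝ (Fin n))
    (H : EuclideanSpace ℝ (Fin n) → EuclideanSpace ℝ (Fin n) →L[ℝ] EuclideanSpace ℝ (Fin n))
    (hgrad : ∀ x : EuclideanSpace ℝ (Fin n), 0 < Metric.infDist x Xᶜ → Metric.infDist x Xᶜ < ρ →
      HasGradientAt (fun y : EuclideanSpace ℝ (Fin n) => Metric.infDist y Xᶜ) (η x) x)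
    (hunit : ∀ x : EuclideanSpace ℝ (Fin n), 0 < Metric.infDist x Xᶜ → Metric.infDist x Xᶜ < ρ → ‖η x‖ = 1)
    (hhess : ∀ x : EuclideanSpace ℝ (Fin n), 0 < Metric.infDist x Xᶜ → Metric.infDist x Xᶜ < ρ →
      HasFDerivAt η (H x) x)
    (hHcont : ContinuousOn H {x : EuclideanSpace ℝ (Fin n) |
      0 < Metric.infDist x Xᶜ ∧ Metric.infDist x Xᶜ < ρ})
    (hHsa : ∀ x : EuclideanSpace ℝ (Fin n), 0 < Metric.infDist x Xᶜ → Metric.infDist x Xᶜ < ρ →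
      ∀ a b : EuclideanSpace ℝ (Fin n), ⟪H x a, b⟫ = ⟪a, H x b⟫)
    (hHbd : ∀ x : EuclideanSpace ℝ (Fin n), 0 < Metric.infDist x Xᶜ → Metric.infDist x Xᶜ < ρ →
      ‖H x‖ ≤ M)
    (p v : ℝ → EuclideanSpace ℝ (Fin n))
    (hp : ∀ t ∈ Set.Ici (0:ℝ), HasDerivWithinAt p (v t) (Set.Ici (0:ℝ)) t)
    (hv : ∀ t ∈ Set.Ici (0:ℝ), HasDerivWithinAt v
      (-(k₁ • (p t - p_d)) - k₂ • v t
        - (k₃ * γ (Metric.infDist (p t) Xᶜ - ε) * ⟪η (p t), v t⟫) • η (p t)) (Set.Ici (0:ℝ)) t)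
    (hsafe : ∀ t ∈ Set.Ici (0:ℝ), 0 < Metric.infDist (p t) Xᶜ - ε)
    (hU : ∀ t ∈ Set.Ici (0:ℝ), 0 < Metric.infDist (p t) Xᶜ ∧ Metric.infDist (p t) Xᶜ < ρ)
    (pstar : EuclideanSpace ℝ (Fin n))
    (hplim : Filter.Tendsto p Filter.atTop (nhds pstar))
    (hdstar : Metric.infDist pstar Xᶜ - ε = 0)
    (hv0 : Filter.Tendsto v Filter.atTop (nhds 0))
    (d1 d2 : ℝ → ℝ)
    (hd1 : ∀ t ∈ Set.Ici (0:ℝ),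
      HasDerivWithinAt (fun s => Metric.infDist (p s) Xᶜ - ε) (d1 t) (Set.Ici (0:ℝ)) t)
    (hd2 : ∀ t ∈ Set.Ici (0:ℝ), HasDerivWithinAt d1 (d2 t) (Set.Ici (0:ℝ)) t)
    (hd1lim : Filter.Tendsto d1 Filter.atTop (nhds 0))
    (hd2lim : Filter.Tendsto d2 Filter.atTop (nhds 0)) :
    Filter.Tendsto
      (fun t => γ (Metric.infDist (p t) Xᶜ - ε) * ⟪η (p t), v t⟫)
      Filter.atTop (nhds (-(k₁ / k₃) * ⟪η pstar, pstar - p_d⟫)) := by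
  have huniq : UniqueDiffOn ℝ (Set.Ici (0:ℝ)) := uniqueDiffOn_Ici 0
  have hd1eq : ∀ t ∈ Set.Ici (0:ℝ), d1 t = ⟪η (p t), v t⟫ := by
    intro t ht
    have h1 := (hgrad (p t) (hU t ht).1 (hU t ht).2).hasFDerivAt.comp_hasDerivWithinAt t (hp t ht)
    have h2 := (huniq t ht).eq_deriv _ (hd1 t ht) (h1.sub_const ε)
    simpa using h2
  have hd2eq : ∀ t ∈ Set.Ici (0:ℝ), d2 t =
      ⟪H (p t) (v t), v t⟫ - k₁ * ⟪η (p t), p t - p_d⟫ - k₂ * d1 t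
        - k₃ * (γ (Metric.infDist (p t) Xᶜ - ε) * ⟪η (p t), v t⟫) := by
    intro t ht
    have hη := (hhess (p t) (hU t ht).1 (hU t ht).2).comp_hasDerivWithinAt t (hp t ht)
    have h1 := (hη.inner ℝ (hv t ht)).congr hd1eq (hd1eq t ht)
    have h2 := (huniq t ht).eq_deriv _ (hd2 t ht) h1
    rw [h2, hd1eq t ht]
    simp only [Function.comp_apply, inner_sub_right, inner_neg_right, inner_smul_right,
      real_inner_self_eq_norm_sq, hunit (p t) (hU t ht).1 (hU t ht).2]
    ring
  have hd0star : Metric.infDist pstar Xᶜ = ε := by linarith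
  have hηlim : Filter.Tendsto (fun t => η (p t)) Filter.atTop (nhds (η pstar)) :=
    (hhess pstar (by linarith) (by linarith)).continuousAt.tendsto.comp hplim
  have hηp : Filter.Tendsto (fun t => ⟪η (p t), p t - p_d⟫) Filter.atTop
      (nhds ⟪η pstar, pstar - p_d⟫) := hηlim.inner (hplim.sub_const p_d)
  have hHv : Filter.Tendsto (fun t => ⟪H (p t) (v t), v t⟫) Filter.atTop (nhds 0) := by
    have hb : Filter.Tendsto (fun t => M * ‖v t‖ * ‖v t‖) Filter.atTop (nhds 0) := by
      simpa using (hv0.norm.const_mul M).mul hv0.norm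
    refine squeeze_zero_norm' ?_ hb
    filter_upwards [Filter.eventually_ge_atTop (0:ℝ)] with t ht
    refine (norm_inner_le_norm _ _).trans ?_
    gcongr
    exact (H (p t)).le_of_opNorm_le (hHbd (p t) (hU t ht).1 (hU t ht).2) (v t)
  have hlim := ((((hHv.sub (hηp.const_mul k₁)).sub (hd1lim.const_mul k₂)).sub hd2lim).const_mul k₃⁻¹)
  have hval : k₃⁻¹ * (0 - k₁ * ⟪η pstar, pstar - p_d⟫ - k₂ * 0 - 0)
      = -(k₁ / k₃) * ⟪η pstar, pstar - p_d⟫ := by ring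
  rw [hval] at hlim
  refine hlim.congr' ?_
  filter_upwards [Filter.eventually_ge_atTop (0:ℝ)] with t ht
  rw [hd2eq t ht]
  field_simp
  ring
end

section
/- Curvature yields closer boundary points: Suppose there exist a unit vector ν with ⟪ν, η⟫ = 0 and a real λ_H > 1/r such that ⟪ν, (∇²f(p*)) ν⟫ = λ_H. Then for every δ > 0 there exists a point p₀ ∈ ℝⁿ with ‖p₀ − p*‖ < δ, f(p₀) = 0, and ‖p₀ − p_d‖ < r = ‖p* − p_d‖. -/
/-!
For a constant `c`, the function `t ↦ f (p* + t ν + c t² η)` vanishes to first order at `0` and has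
second derivative `λ + 2 c` there, where `λ = ⟪ν, Hf ν⟫`.  Fix `μ` strictly between `1 / r` and `λ`.
The second derivative test, with `c = -μ / 2` and with `c = -(λ + 1) / 2`, shows that for all small
`t`, on the segment `{p* + t ν + s η : -(λ + 1) / 2 * t² ≤ s ≤ -μ / 2 * t²}`, `f` is nonnegative at
the upper end and nonpositive at the lower end, so `f` has a zero on it by the
intermediate value theorem.  At such a zero the squared distance to `p* - r η` is
`t² + (r + s)² ≤ r² + t² (1 - r μ) + O(t⁴)`, which is below `r²` because `r μ > 1`.
-/

open scoped RealInnerProductSpace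

open Filter Topology

section Parabola

variable {E : Type*} [NormedAddCommGroup E] [InnerProductSpace ℝ E]

theorem hasDerivAt_parabola (p ν η : E) (c t : ℝ) :
    HasDerivAt (fun t : ℝ => p + t • ν + (c * t ^ 2) • η) (ν + (c * (2 * t)) • η) t := by
  have h1 : HasDerivAt (fun t : ℝ => t • ν) ν t := by
    simpa using (hasDerivAt_id t).smul_const ν
  have h2 : HasDerivAt (fun t : ℝ => (c * t ^ 2) • η) ((c * (2 * t)) • η) t := by
    have : HasDerivAt (fun t : ℝ => c * t ^ 2) (c * (2 * t)) t := by
      simpa using (hasDerivAt_pow 2 t).const_mul c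
    exact this.smul_const η
  exact (h1.const_add p).add h2

/-- First and second derivative at `0` of `f` along a parabola tangent to its level set. -/
theorem deriv_along_parabola [CompleteSpace E] {f : E → ℝ} {g : E → E} {p ν η : E} {H : E →L[ℝ] E}
    (hg : ∀ᶠ x in 𝓝 p, HasGradientAt f (g x) x) (hH : HasFDerivAt g H p)
    (hη : g p = η) (hηunit : ‖η‖ = 1) (hνη : ⟪ν, η⟫ = 0) (c : ℝ) :
    ContinuousAt (fun t : ℝ => f (p + t • ν + (c * t ^ 2) • η)) 0 ∧
    deriv (fun t : ℝ => f (p + t • ν + (c * t ^ 2) • η)) 0 = 0 ∧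
    deriv (deriv (fun t : ℝ => f (p + t • ν + (c * t ^ 2) • η))) 0 = ⟪ν, H ν⟫ + 2 * c := by
  set x : ℝ → E := fun t => p + t • ν + (c * t ^ 2) • η with hx
  have hx0 : x 0 = p := by simp [hx]
  have hxd : ∀ t, HasDerivAt x (ν + (c * (2 * t)) • η) t := hasDerivAt_parabola p ν η c
  have hg' : ∀ᶠ t in 𝓝 (0 : ℝ), HasGradientAt f (g (x t)) (x t) := by
    have := (hxd 0).continuousAt.tendsto
    rw [hx0] at this
    exact this.eventually hg
  have hφ : ∀ᶠ t in 𝓝 (0 : ℝ),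
      HasDerivAt (fun t => f (x t)) ⟪g (x t), ν + (c * (2 * t)) • η⟫ t := by
    filter_upwards [hg'] with t ht
    have := ht.hasFDerivAt.comp_hasDerivAt t (hxd t)
    simpa [Function.comp_def] using this
  have hgx : HasDerivAt (fun t => g (x t)) (H ν) 0 := by
    have h := hxd 0
    have hH' : HasFDerivAt g H (x 0) := by rwa [hx0]
    simpa [Function.comp_def] using hH'.comp_hasDerivAt 0 h
  have hv : HasDerivAt (fun t : ℝ => ν + (c * (2 * t)) • η) ((2 * c) • η) 0 := by
    have : HasDerivAt (fun t : ℝ => c * (2 * t)) (2 * c) 0 := by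
      have := ((hasDerivAt_id (0 : ℝ)).const_mul 2).const_mul c
      simpa [mul_comm] using this
    exact (this.smul_const η).const_add ν
  refine ⟨hφ.self_of_nhds.continuousAt, ?_, ?_⟩
  · rw [hφ.self_of_nhds.deriv, hx0, hη]
    simp [real_inner_comm, hνη]
  · have he : deriv (fun t => f (x t)) =ᶠ[𝓝 0] fun t => ⟪g (x t), ν + (c * (2 * t)) • η⟫ :=
      hφ.mono fun t ht => ht.deriv
    rw [he.deriv_eq, (hgx.inner ℝ hv).deriv, hx0, hη]
    simp [inner_smul_right, hηunit, real_inner_comm]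
    ring

end Parabola

theorem curvature_closer_boundary_points {n : ℕ} (hn : 2 ≤ n)
    (f : EuclideanSpace ℝ (Fin n) → ℝ)
    (pstar : EuclideanSpace ℝ (Fin n))
    (V : Set (EuclideanSpace ℝ (Fin n))) (hV : V ∈ nhds pstar)
    (hf : ContDiffOn ℝ 2 f V)
    (g : EuclideanSpace ℝ (Fin n) → EuclideanSpace ℝ (Fin n))
    (hg : ∀ x ∈ V, HasGradientAt f (g x) x)
    (η : EuclideanSpace ℝ (Fin n))
    (hη : g pstar = η) (hηunit : ‖η‖ = 1)
    (hf0 : f pstar = 0)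
    (Hf : EuclideanSpace ℝ (Fin n) →L[ℝ] EuclideanSpace ℝ (Fin n))
    (hHf : HasFDerivAt g Hf pstar)
    (hHsa : ∀ a b : EuclideanSpace ℝ (Fin n), ⟪Hf a, b⟫ = ⟪a, Hf b⟫)
    (r : ℝ) (hr : 0 < r)
    (ν : EuclideanSpace ℝ (Fin n)) (hν : ‖ν‖ = 1) (hνη : ⟪ν, η⟫ = 0)
    (lH : ℝ) (hlH : 1 / r < lH) (heig : ⟪ν, Hf ν⟫ = lH) :
    ∀ δ > 0, ∃ p₀ : EuclideanSpace ℝ (Fin n),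
      ‖p₀ - pstar‖ < δ ∧ f p₀ = 0 ∧ ‖p₀ - (pstar - r • η)‖ < r := by
  intro δ hδ
  obtain ⟨μ, hμ1, hμ2⟩ := exists_between hlH
  have hμ0 : 0 < μ := lt_trans (by positivity) hμ1
  have hrμ : 1 < r * μ := by
    rw [div_lt_iff₀ hr] at hμ1
    linarith
  obtain ⟨ε, hε, hεV⟩ := Metric.mem_nhds_iff.1 hV
  have hgV : ∀ᶠ x in 𝓝 pstar, HasGradientAt f (g x) x := by
    filter_upwards [hV] with x hx using hg x hx
  have hupper : ∀ᶠ t in 𝓝 (0 : ℝ), 0 ≤ f (pstar + t • ν + (-μ / 2 * t ^ 2) • η) := by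
    obtain ⟨h0, h1, h2⟩ := deriv_along_parabola hgV hHf hη hηunit hνη (-μ / 2)
    have := isLocalMin_of_deriv_deriv_pos (by rw [h2, heig]; linarith) h1 h0
    simpa [IsLocalMin, IsMinFilter, hf0] using this
  have hlower : ∀ᶠ t in 𝓝 (0 : ℝ), f (pstar + t • ν + (-(lH + 1) / 2 * t ^ 2) • η) ≤ 0 := by
    obtain ⟨h0, h1, h2⟩ := deriv_along_parabola hgV hHf hη hηunit hνη (-(lH + 1) / 2)
    have := isLocalMax_of_deriv_deriv_neg (by rw [h2, heig]; linarith) h1 h0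
    simpa [IsLocalMax, IsMaxFilter, hf0] using this
  have hsmall : ∀ᶠ t in 𝓝 (0 : ℝ), |t| + (lH + 1) / 2 * t ^ 2 < min ε δ := by
    have hc : Continuous fun t : ℝ => |t| + (lH + 1) / 2 * t ^ 2 := by fun_prop
    exact hc.continuousAt.eventually_lt_const (by simp [hε, hδ])
  have hquart : ∀ᶠ t in 𝓝 (0 : ℝ), ((lH + 1) / 2) ^ 2 * t ^ 2 < r * μ - 1 := by
    have hc : Continuous fun t : ℝ => ((lH + 1) / 2) ^ 2 * t ^ 2 := by fun_prop
    exact hc.continuousAt.eventually_lt_const (by simp [hrμ])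
  obtain ⟨t, ⟨htu, htl, hts, htq⟩, ht⟩ :=
    ((((hupper.and (hlower.and (hsmall.and hquart))).filter_mono nhdsWithin_le_nhds).and
      (self_mem_nhdsWithin : Set.Ioi (0 : ℝ) ∈ 𝓝[>] (0 : ℝ)))).exists
  have ht0 : 0 < t := ht
  have ht2 : 0 < t ^ 2 := by positivity
  have hclose : ∀ s ∈ Set.Icc (-(lH + 1) / 2 * t ^ 2) (-μ / 2 * t ^ 2),
      ‖pstar + t • ν + s • η - pstar‖ < min ε δ := by
    intro s hs
    have hs0 : |s| ≤ (lH + 1) / 2 * t ^ 2 := by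
      rw [abs_le]
      constructor <;> nlinarith [hs.1, hs.2]
    calc ‖pstar + t • ν + s • η - pstar‖ = ‖t • ν + s • η‖ := by congr 1; abel
      _ ≤ ‖t • ν‖ + ‖s • η‖ := norm_add_le _ _
      _ = |t| + |s| := by simp [norm_smul, hν, hηunit]
      _ < min ε δ := by linarith
  have hcont : ContinuousOn (fun s : ℝ => f (pstar + t • ν + s • η))
      (Set.Icc (-(lH + 1) / 2 * t ^ 2) (-μ / 2 * t ^ 2)) := by
    intro s hs
    have hmem : pstar + t • ν + s • η ∈ V := hεV (by
      rw [mem_ball_iff_norm]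
      exact (hclose s hs).trans_le (min_le_left _ _))
    have hc : ContinuousAt (fun s : ℝ => pstar + t • ν + s • η) s := by fun_prop
    exact (ContinuousAt.comp (f := fun s : ℝ => pstar + t • ν + s • η)
      (hg _ hmem).continuousAt hc).continuousWithinAt
  obtain ⟨s, hs, hfs⟩ := intermediate_value_Icc (by nlinarith) hcont ⟨htl, htu⟩
  refine ⟨pstar + t • ν + s • η, (hclose s hs).trans_le (min_le_right _ _), hfs, ?_⟩
  have hnorm : ‖pstar + t • ν + s • η - (pstar - r • η)‖ ^ 2 = t ^ 2 + (s + r) ^ 2 := by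
    have : pstar + t • ν + s • η - (pstar - r • η) = t • ν + (s + r) • η := by
      rw [add_smul]; abel
    rw [this, norm_add_sq_real]
    simp [norm_smul, inner_smul_left, inner_smul_right, hνη, hν, hηunit]
  refine lt_of_pow_lt_pow_left₀ 2 hr.le ?_
  rw [hnorm]
  have hs2 : s ^ 2 ≤ ((lH + 1) / 2 * t ^ 2) ^ 2 := by
    apply sq_le_sq'
    · linarith [hs.1]
    · nlinarith [hs.2]
  have hrs : r * s ≤ r * (-μ / 2 * t ^ 2) := mul_le_mul_of_nonneg_left hs.2 hr.le
  -- `t² + 2 r s + s² ≤ t² (1 - r μ + ((λ + 1) / 2)² t²) < 0`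
  nlinarith [mul_lt_mul_of_pos_left htq ht2]
end

section
/- Gradient of the distance-to-set function (Equation (2)): Let A ⊆ ℝⁿ be a nonempty closed set and p ∉ A, and suppose the function f(x) := infDist(x, A) is differentiable at p. Then there is exactly one point y ∈ A with dist(p, y) = infDist(p, A), and the gradient of f at p equals (p − y)/‖p − y‖; in particular ‖∇f(p)‖ = 1. -/
/-!
Let `f = infDist · A`, `d = f p > 0` and let `y ∈ A` be a nearest point to `p`. On the segment from
`p` to `y` the function `f` decreases at unit speed, `f (p + t (y - p)) = (1 - t) d`: the upper
bound comes from the competitor `y`, the lower bound from `f` being 1-Lipschitz. Differentiating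
at `t = 0⁺` gives `⟪g, p - y⟫ = ‖p - y‖`. Since `‖g‖ ≤ 1` by the Lipschitz bound, this is the
equality case of Cauchy–Schwarz, so `g = (p - y) / ‖p - y‖`. Hence `y = p - d g` is determined by
`g`, which gives uniqueness; existence is properness of `ℝⁿ`.
-/

/-- Moving from `p` straight towards a nearest point `y` decreases the distance at unit speed. -/
lemma infDist_segment_to_nearest {E : Type*} [NormedAddCommGroup E] [NormedSpace ℝ E]
    {A : Set E} {p y : E} (hy : y ∈ A) (hd : dist p y = Metric.infDist p A)
    {t : ℝ} (ht : t ∈ Set.Icc (0 : ℝ) 1) :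
    Metric.infDist (p + t • (y - p)) A = (1 - t) * dist p y := by
  have h1 : Metric.infDist (p + t • (y - p)) A ≤ dist (p + t • (y - p)) y :=
    Metric.infDist_le_dist_of_mem hy
  have h2 : dist (p + t • (y - p)) y = (1 - t) * dist p y := by
    rw [dist_eq_norm, dist_eq_norm,
      show p + t • (y - p) - y = (1 - t) • (p - y) by module, norm_smul, Real.norm_eq_abs,
      abs_of_nonneg (sub_nonneg.2 ht.2)]
  have h3 : Metric.infDist p A ≤
      Metric.infDist (p + t • (y - p)) A + dist p (p + t • (y - p)) :=
    Metric.infDist_le_infDist_add_dist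
  have h4 : dist p (p + t • (y - p)) = t * dist p y := by
    rw [dist_eq_norm, dist_eq_norm,
      show p - (p + t • (y - p)) = t • (p - y) by module, norm_smul, Real.norm_eq_abs,
      abs_of_nonneg ht.1]
  linarith

lemma inner_gradient_infDist {E : Type*} [NormedAddCommGroup E] [InnerProductSpace ℝ E]
    [CompleteSpace E] {A : Set E} {p y g : E}
    (hg : HasGradientAt (fun x => Metric.infDist x A) g p)
    (hy : y ∈ A) (hd : dist p y = Metric.infDist p A) :
    inner ℝ g (p - y) = ‖p - y‖ := by
  have hline : HasDerivAt (fun t : ℝ => p + t • (y - p)) (y - p) 0 := by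
    simpa using ((hasDerivAt_id (0 : ℝ)).smul_const (y - p)).const_add p
  have hcomp : HasDerivAt (fun t : ℝ => Metric.infDist (p + t • (y - p)) A)
      (inner ℝ g (y - p)) 0 := by
    have hg' : HasFDerivAt (fun x => Metric.infDist x A) (InnerProductSpace.toDual ℝ E g)
        (p + (0 : ℝ) • (y - p)) := by
      simpa using hg.hasFDerivAt
    exact hg'.comp_hasDerivAt (0 : ℝ) hline
  have haff : HasDerivAt (fun t : ℝ => (1 - t) * dist p y) (-dist p y) 0 := by
    simpa using ((hasDerivAt_id (0 : ℝ)).const_sub 1).mul_const (dist p y)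
  have hmem : (0 : ℝ) ∈ Set.Icc (0 : ℝ) 1 := ⟨le_rfl, zero_le_one⟩
  have hseg : HasDerivWithinAt (fun t : ℝ => Metric.infDist (p + t • (y - p)) A)
      (-dist p y) (Set.Icc 0 1) 0 :=
    haff.hasDerivWithinAt.congr (fun t ht => infDist_segment_to_nearest hy hd ht)
      (infDist_segment_to_nearest hy hd hmem)
  have heq : inner ℝ g (y - p) = -dist p y :=
    (uniqueDiffOn_Icc zero_lt_one 0 hmem).eq_deriv _ hcomp.hasDerivWithinAt hseg
  rw [← neg_sub y p, inner_neg_right, heq, neg_neg, dist_eq_norm, neg_sub]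

lemma norm_gradient_infDist_le {E : Type*} [NormedAddCommGroup E] [InnerProductSpace ℝ E]
    [CompleteSpace E] {A : Set E} {p g : E}
    (hg : HasGradientAt (fun x => Metric.infDist x A) g p) : ‖g‖ ≤ 1 := by
  simpa using hg.hasFDerivAt.le_of_lipschitz (Metric.lipschitz_infDist_pt A)

/-- The equality case of Cauchy–Schwarz, for a vector `g` in the closed unit ball. -/
lemma eq_normalize_of_inner_eq_norm {E : Type*} [NormedAddCommGroup E] [InnerProductSpace ℝ E]
    {g v : E} (hv : v ≠ 0) (hg : ‖g‖ ≤ 1) (h : inner ℝ g v = ‖v‖) : g = ‖v‖⁻¹ • v := by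
  have hv' : ‖v‖ ≠ 0 := norm_ne_zero_iff.2 hv
  have hu : ‖‖v‖⁻¹ • v‖ = 1 := norm_smul_inv_norm (𝕜 := ℝ) hv
  have hi : inner ℝ g (‖v‖⁻¹ • v) = 1 := by
    rw [inner_smul_right, h, inv_mul_cancel₀ hv']
  have hs := norm_sub_sq_real g (‖v‖⁻¹ • v)
  rw [hu, hi] at hs
  have h0 : ‖g - ‖v‖⁻¹ • v‖ ^ 2 = 0 :=
    le_antisymm (by nlinarith [norm_nonneg g]) (sq_nonneg _)
  exact sub_eq_zero.1 (norm_eq_zero.1 (pow_eq_zero_iff two_ne_zero |>.1 h0))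

theorem gradient_of_infDist {n : ℕ}
    (A : Set (EuclideanSpace ℝ (Fin n))) (hA : IsClosed A) (hAne : A.Nonempty)
    (p : EuclideanSpace ℝ (Fin n)) (hp : p ∉ A)
    (g : EuclideanSpace ℝ (Fin n))
    (hg : HasGradientAt (fun x => Metric.infDist x A) g p) :
    (∃! y, y ∈ A ∧ dist p y = Metric.infDist p A) ∧
    (∀ y ∈ A, dist p y = Metric.infDist p A → g = ‖p - y‖⁻¹ • (p - y)) ∧
    ‖g‖ = 1 := by
  have hne : ∀ y ∈ A, p - y ≠ 0 := fun y hy h => hp (sub_eq_zero.1 h ▸ hy)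
  have key : ∀ y ∈ A, dist p y = Metric.infDist p A → g = ‖p - y‖⁻¹ • (p - y) :=
    fun y hy hd => eq_normalize_of_inner_eq_norm (hne y hy) (norm_gradient_infDist_le hg)
      (inner_gradient_infDist hg hy hd)
  have hrec : ∀ y ∈ A, dist p y = Metric.infDist p A → y = p - Metric.infDist p A • g := by
    intro y hy hd
    rw [key y hy hd, ← hd, dist_eq_norm, smul_inv_smul₀ (norm_ne_zero_iff.2 (hne y hy)),
      sub_sub_cancel]
  obtain ⟨y, hy, hd⟩ := hA.exists_infDist_eq_dist hAne p
  refine ⟨⟨y, ⟨hy, hd.symm⟩, fun z hz => ?_⟩, key, ?_⟩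
  · rw [hrec z hz.1 hz.2, ← hrec y hy hd.symm]
  · rw [key y hy hd.symm]
    exact norm_smul_inv_norm (𝕜 := ℝ) (hne y hy)
end

section
/- Scalar barrier lemma, positivity (used via [Tang2023, Lemma 1]): Let x : [0, T) → ℝ be twice differentiable with x(0) > 0, and let α : [0, T) → ℝ satisfy |α(t)| ≤ M for all t. Assume that for every t ∈ [0, T) with x(s) > 0 for all s ∈ [0, t], the equation x″(t) = −k₃ γ(x(t)) x′(t) − k₂ x′(t) − α(t) holds. Then x(t) > 0 for all t ∈ [0, T). -/
/-!
Near `x = 0` the equation reads `x'' = -k₃ x' / x - k₂ x' - α`, which integrates once: the quantity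
`x' + k₃ log x + k₂ x` has derivative `-α ≥ -M`, so it stays bounded below on bounded time intervals.
If `x` had a first zero `t₁`, then `x'` and `x` would have finite limits as `t ↑ t₁` (`x'` is
differentiable, hence continuous) while `log x → -∞`, which is a contradiction.
-/


theorem scalar_barrier_positivity (ε₁ k₂ k₃ M : ℝ)
    (hε₁ : 0 < ε₁) (hk₂ : 0 < k₂) (hk₃ : 0 < k₃) (hM : 0 ≤ M)
    (γ : ℝ → ℝ) (hγc : ContinuousOn γ (Set.Ioi (0:ℝ)))
    (hγnn : ∀ z, 0 < z → 0 ≤ γ z)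
    (hγ : ∀ z, 0 < z → z < ε₁ → γ z = 1 / z)
    (I : Set ℝ) (hI : (∃ T > 0, I = Set.Ico (0:ℝ) T) ∨ I = Set.Ici (0:ℝ))
    (x x' x'' α : ℝ → ℝ)
    (hx : ∀ t ∈ I, HasDerivWithinAt x (x' t) I t)
    (hx' : ∀ t ∈ I, HasDerivWithinAt x' (x'' t) I t)
    (hα : ∀ t ∈ I, |α t| ≤ M)
    (h0I : (0:ℝ) ∈ I)
    (h0 : 0 < x 0)
    (hode : ∀ t ∈ I, (∀ s, 0 ≤ s → s ≤ t → 0 < x s) →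
      x'' t = -(k₃ * γ (x t) * x' t) - k₂ * x' t - α t) :
    ∀ t ∈ I, 0 < x t := by
  have hnhds : ∀ t ∈ I, 0 < t → I ∈ nhds t := by
    rintro t ht ht0
    rcases hI with ⟨T, -, rfl⟩ | rfl
    · exact Ico_mem_nhds ht0 ht.2
    · exact Ici_mem_nhds ht0
  have hsub : ∀ t ∈ I, Set.Icc 0 t ⊆ I := by
    rintro t ht s hs
    rcases hI with ⟨T, -, rfl⟩ | rfl
    · exact ⟨hs.1, hs.2.trans_lt ht.2⟩
    · exact hs.1
  by_contra! hcon
  obtain ⟨t₂, ht₂, hxt₂⟩ := hcon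
  have ht₂0 : 0 ≤ t₂ := by
    rcases hI with ⟨T, -, rfl⟩ | rfl
    · exact ht₂.1
    · exact ht₂
  have hcont : ContinuousOn x (Set.Icc 0 t₂) := fun s hs =>
    ((hx s (hsub t₂ ht₂ hs)).continuousWithinAt).mono (hsub t₂ ht₂)
  -- `t₁` is the first time at which `x` fails to be positive.
  obtain ⟨t₁, ⟨ht₁mem, ht₁x⟩, hleast⟩ :=
    (isCompact_Icc.of_isClosed_subset
      (hcont.preimage_isClosed_of_isClosed isClosed_Icc isClosed_Iic)
      Set.inter_subset_left).exists_isLeast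
      (⟨t₂, ⟨ht₂0, le_rfl⟩, hxt₂⟩ : (Set.Icc 0 t₂ ∩ x ⁻¹' Set.Iic 0).Nonempty)
  have ht₁x : x t₁ ≤ 0 := ht₁x
  have ht₁I : t₁ ∈ I := hsub t₂ ht₂ ht₁mem
  have hpos : ∀ s, 0 ≤ s → s < t₁ → 0 < x s := by
    intro s hs hst
    by_contra! h
    exact absurd (hleast ⟨⟨hs, hst.le.trans ht₁mem.2⟩, h⟩) (not_le.2 hst)
  have ht₁0 : 0 < t₁ := by
    rcases ht₁mem.1.eq_or_lt with h | h
    · rw [← h] at ht₁x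
      exact absurd h0 (not_lt.2 ht₁x)
    · exact h
  have hxd : ∀ t, 0 < t → t ≤ t₁ → HasDerivAt x (x' t) t := fun t h h' =>
    have hm := hsub t₁ ht₁I ⟨h.le, h'⟩
    (hx t hm).hasDerivAt (hnhds t hm h)
  have hxd' : ∀ t, 0 < t → t ≤ t₁ → HasDerivAt x' (x'' t) t := fun t h h' =>
    have hm := hsub t₁ ht₁I ⟨h.le, h'⟩
    (hx' t hm).hasDerivAt (hnhds t hm h)
  have hlim : Filter.Tendsto x (nhdsWithin t₁ (Set.Iio t₁)) (nhds (x t₁)) :=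
    (hxd t₁ ht₁0 le_rfl).continuousAt.tendsto.mono_left nhdsWithin_le_nhds
  have hlim' : Filter.Tendsto x' (nhdsWithin t₁ (Set.Iio t₁)) (nhds (x' t₁)) :=
    (hxd' t₁ ht₁0 le_rfl).continuousAt.tendsto.mono_left nhdsWithin_le_nhds
  have hevpos : ∀ᶠ t in nhdsWithin t₁ (Set.Iio t₁), 0 < x t := by
    filter_upwards [Ioo_mem_nhdsLT ht₁0] with t ht using hpos t ht.1.le ht.2
  have hzero : x t₁ = 0 :=
    le_antisymm ht₁x (ge_of_tendsto hlim (hevpos.mono fun _ h => h.le))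
  rw [hzero] at hlim
  have hevsmall : ∀ᶠ t in nhdsWithin t₁ (Set.Iio t₁), x t < ε₁ :=
    hlim.eventually (gt_mem_nhds hε₁)
  obtain ⟨a, ha, hasmall⟩ := (mem_nhdsLT_iff_exists_Ioo_subset' ht₁0).1 hevsmall
  -- On `[t₀, t₁)` the trajectory lies in the region where `γ z = 1 / z`.
  obtain ⟨t₀, ht₀, ht₀₁⟩ := exists_between (max_lt (show a < t₁ from ha) ht₁0)
  have hat₀ : a < t₀ := (le_max_left _ _).trans_lt ht₀
  have ht₀0 : 0 < t₀ := (le_max_right _ _).trans_lt ht₀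
  -- The term `M * t` absorbs `α`, so that `W` is nondecreasing on `[t₀, t₁)`.
  set W : ℝ → ℝ := fun t => x' t + k₃ * Real.log (x t) + k₂ * x t + M * t with hW
  have hWd : ∀ t ∈ Set.Ico t₀ t₁, HasDerivAt W (M - α t) t := by
    intro t ht
    have ht0 : 0 < t := ht₀0.trans_le ht.1
    have hxp := hpos t ht0.le ht.2
    have hode' := hode t (hsub t₁ ht₁I ⟨ht0.le, ht.2.le⟩)
      fun s hs hst => hpos s hs (hst.trans_lt ht.2)
    rw [hγ _ hxp (hasmall ⟨hat₀.trans_le ht.1, ht.2⟩)] at hode'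
    have hd := hxd t ht0 ht.2.le
    refine ((((hxd' t ht0 ht.2.le).add ((hd.log hxp.ne').const_mul k₃)).add
      (hd.const_mul k₂)).add ((hasDerivAt_id t).const_mul M)).congr_deriv ?_
    rw [hode']
    ring
  have hmono : MonotoneOn W (Set.Ico t₀ t₁) := by
    refine monotoneOn_of_deriv_nonneg (convex_Ico _ _)
      (fun t ht => (hWd t ht).continuousAt.continuousWithinAt)
      (fun t ht => (hWd t (interior_subset ht)).differentiableAt.differentiableWithinAt) ?_
    intro t ht
    have ht := interior_subset ht
    rw [(hWd t ht).deriv]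
    have := hα t (hsub t₁ ht₁I ⟨ht₀0.le.trans ht.1, ht.2.le⟩)
    linarith [le_abs_self (α t)]
  have hlog : Filter.Tendsto (fun t => k₃ * Real.log (x t))
      (nhdsWithin t₁ (Set.Iio t₁)) Filter.atBot :=
    (Real.tendsto_log_nhdsGT_zero.comp
      (tendsto_nhdsWithin_iff.2 ⟨hlim, hevpos⟩)).const_mul_atBot hk₃
  have hM' : Filter.Tendsto (fun t : ℝ => M * t) (nhdsWithin t₁ (Set.Iio t₁))
      (nhds (M * t₁)) :=
    (Filter.tendsto_id.mono_left nhdsWithin_le_nhds).const_mul M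
  have hWlim : Filter.Tendsto W (nhdsWithin t₁ (Set.Iio t₁)) Filter.atBot :=
    ((hlim'.add_atBot hlog).atBot_add (hlim.const_mul k₂)).atBot_add hM'
  obtain ⟨t, htW, ht⟩ :=
    ((hWlim.eventually_lt_atBot (W t₀)).and (Ioo_mem_nhdsLT ht₀₁)).exists
  exact absurd (hmono ⟨le_rfl, ht₀₁⟩ ⟨ht.1.le, ht.2⟩ ht.1.le) (not_le.2 htW)
end
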